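/- arXiv:1405.1165 — 2 statements merged into one kernel-verified Lean document; each statement's English description precedes it below -/
import Mathlib

section
/- Let d ≥ 1 and a > 2b > 0, let Q be the radial ground state, and let v : [0,∞) → ℝ be the unique solution of the linearized equation v'' + ((d−1)/r)v' + F'(Q)v = 0 with v(0) = 1 and v'(0) = 0. Then |v(r)| diverges exponentially fast as r → ∞; more precisely, if d ≥ 2 there exist constants c > 0 and ε > 0 such that v(r) ≤ −c·e^{εr} and v'(r) ≤ −c·e^{εr} for all sufficiently large r, so that v(r) → −∞ and v'(r) → −∞ exponentially fast. -/
open Real Filter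

noncomputable section

/-- The nonlinearity `F(x) = (a/2)·sin(2x)·(sin²x − b/a)`. -/
def Fnl (a b x : ℝ) : ℝ := (a / 2) * Real.sin (2 * x) * (Real.sin x ^ 2 - b / a)

/-- `u` solves the radial ODE `u'' + ((d−1)/r)u' + F(u) = 0` on `(0,∞)` with `u'(0) = 0`. -/
def IsRadialSol (d : ℕ) (a b : ℝ) (u : ℝ → ℝ) : Prop :=
  ContDiff ℝ 2 u ∧ deriv u 0 = 0 ∧
  ∀ r : ℝ, 0 < r →
    deriv (deriv u) r + (((d : ℝ) - 1) / r) * deriv u r + Fnl a b (u r) = 0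

/-- `v` solves the linearized equation `v'' + ((d−1)/r)v' + F'(w)v = 0`
with `v(0) = 1`, `v'(0) = 0`. -/
def IsLinearizedSol (d : ℕ) (a b : ℝ) (w v : ℝ → ℝ) : Prop :=
  ContDiff ℝ 2 v ∧ v 0 = 1 ∧ deriv v 0 = 0 ∧
  ∀ r : ℝ, 0 < r →
    deriv (deriv v) r + (((d : ℝ) - 1) / r) * deriv v r
      + deriv (Fnl a b) (w r) * v r = 0

open Set Topology

set_option linter.all false

/-! ### Mean value helpers -/

lemma mv_lt {f f' : ℝ → ℝ} {x y : ℝ} (hxy : x < y) (hc : ContinuousOn f (Icc x y))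
    (hd : ∀ z ∈ Ioo x y, HasDerivAt f (f' z) z) (h : ∀ z ∈ Ioo x y, 0 < f' z) : f x < f y := by
  obtain ⟨c, hc1, hc2⟩ := exists_hasDerivAt_eq_slope f f' hxy hc hd
  have := h c hc1
  rw [hc2] at this
  have h2 : 0 < y - x := by linarith
  have := (div_pos_iff_of_pos_right h2).1 this
  linarith

lemma mv_le {f f' : ℝ → ℝ} {x y : ℝ} (hxy : x ≤ y) (hc : ContinuousOn f (Icc x y))
    (hd : ∀ z ∈ Ioo x y, HasDerivAt f (f' z) z) (h : ∀ z ∈ Ioo x y, 0 ≤ f' z) : f x ≤ f y := by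
  rcases hxy.eq_or_lt with rfl | hxy
  · exact le_rfl
  obtain ⟨c, hc1, hc2⟩ := exists_hasDerivAt_eq_slope f f' hxy hc hd
  have := h c hc1
  rw [hc2] at this
  have h2 : 0 < y - x := by linarith
  have := mul_nonneg this h2.le
  rw [div_mul_cancel₀ _ h2.ne'] at this
  linarith

lemma mv_gt {f f' : ℝ → ℝ} {x y : ℝ} (hxy : x < y) (hc : ContinuousOn f (Icc x y))
    (hd : ∀ z ∈ Ioo x y, HasDerivAt f (f' z) z) (h : ∀ z ∈ Ioo x y, f' z < 0) : f y < f x := by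
  have := mv_lt (f := fun z => - f z) (f' := fun z => - f' z) hxy hc.neg
    (fun z hz => (hd z hz).neg) (fun z hz => by have := h z hz; linarith)
  linarith

lemma mv_ge {f f' : ℝ → ℝ} {x y : ℝ} (hxy : x ≤ y) (hc : ContinuousOn f (Icc x y))
    (hd : ∀ z ∈ Ioo x y, HasDerivAt f (f' z) z) (h : ∀ z ∈ Ioo x y, f' z ≤ 0) : f y ≤ f x := by
  have := mv_le (f := fun z => - f z) (f' := fun z => - f' z) hxy hc.neg
    (fun z hz => (hd z hz).neg) (fun z hz => by have := h z hz; linarith)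
  linarith

/-! ### The nonlinearity -/

def Fd (a b x : ℝ) : ℝ :=
  a * Real.cos (2 * x) * (Real.sin x ^ 2 - b / a)
    + (a / 2) * Real.sin (2 * x) * (2 * Real.sin x * Real.cos x)

def Gn (a b x : ℝ) : ℝ := (a / 4) * Real.sin x ^ 4 - (b / 2) * Real.sin x ^ 2

lemma hasDerivAt_Fnl (a b x : ℝ) : HasDerivAt (Fnl a b) (Fd a b x) x := by
  have h2 : HasDerivAt (fun x : ℝ => Real.sin (2 * x)) (Real.cos (2 * x) * (2 * 1)) x :=
    ((hasDerivAt_id x).const_mul 2).sin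
  have h3 := ((Real.hasDerivAt_sin x).pow 2).sub_const (b / a)
  have h := (h2.const_mul (a / 2)).mul h3
  refine HasDerivAt.congr_deriv h ?_
  simp only [Fd, Pi.pow_apply]; push_cast; ring

lemma deriv_Fnl (a b x : ℝ) : deriv (Fnl a b) x = Fd a b x := (hasDerivAt_Fnl a b x).deriv

lemma hasDerivAt_Gn {a : ℝ} (ha : 0 < a) (b x : ℝ) : HasDerivAt (Gn a b) (Fnl a b x) x := by
  have h := (((Real.hasDerivAt_sin x).pow 4).const_mul (a / 4)).sub
    (((Real.hasDerivAt_sin x).pow 2).const_mul (b / 2))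
  refine HasDerivAt.congr_deriv h ?_
  simp only [Fnl, Real.sin_two_mul]; push_cast; field_simp

lemma continuous_Fnl (a b : ℝ) : Continuous (Fnl a b) := by unfold Fnl; fun_prop
lemma continuous_Fd (a b : ℝ) : Continuous (Fd a b) := by unfold Fd; fun_prop
lemma continuous_Gn (a b : ℝ) : Continuous (Gn a b) := by unfold Gn; fun_prop

lemma Fnl_eq {a : ℝ} (ha : 0 < a) (b x : ℝ) :
    Fnl a b x = (a / 4) * (Real.sin (2 * x) * ((1 - 2 * (b / a)) - Real.cos (2 * x))) := by
  simp only [Fnl, Real.cos_two_mul, Real.sin_sq]; ring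

lemma Fd_eq {a : ℝ} (ha : 0 < a) (b x : ℝ) :
    Fd a b x = (a / 2) * ((1 - 2 * (b / a)) * Real.cos (2 * x) - Real.cos (2 * x) ^ 2
      + Real.sin (2 * x) ^ 2) := by
  simp only [Fd, Real.cos_two_mul, Real.sin_two_mul]
  have := Real.sin_sq_add_cos_sq x
  have h : Real.sin x ^ 2 = 1 - Real.cos x ^ 2 := by linarith
  ring_nf
  rw [show Real.sin x ^ 2 = 1 - Real.cos x ^ 2 from h]
  ring

lemma mul_cos_lt_sin {t : ℝ} (h0 : 0 < t) (h1 : t < π) : t * Real.cos t < Real.sin t := by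
  have h := mv_lt (f := fun t => Real.sin t - t * Real.cos t) (f' := fun t => t * Real.sin t)
    h0 (by fun_prop) (fun z _ => by
      have := (Real.hasDerivAt_sin z).sub ((hasDerivAt_id z).mul (Real.hasDerivAt_cos z))
      refine HasDerivAt.congr_deriv this ?_
      simp) (fun z hz => mul_pos hz.1 (Real.sin_pos_of_pos_of_lt_pi hz.1 (hz.2.trans h1)))
  simp at h
  linarith

lemma I1_pos {k t : ℝ} (h0 : 0 < t) (h1 : t < π) (hk : k ≤ Real.cos t) :
    Real.sin t * (k - Real.cos t) < t * (k * Real.cos t - Real.cos t ^ 2 + Real.sin t ^ 2) := by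
  have h2 := mul_cos_lt_sin h0 h1
  have h3 : 0 < t * Real.sin t ^ 2 :=
    mul_pos h0 (pow_pos (Real.sin_pos_of_pos_of_lt_pi h0 h1) 2)
  nlinarith [mul_nonneg (sub_nonneg.2 hk) (sub_nonneg.2 h2.le)]

/-- the ratio `x F'(x) / F(x)` -/
lemma ratio_anti {k s t : ℝ} (hk0 : 0 < k) (hk1 : k < 1) (h0 : 0 < s) (hst : s < t) (h1 : t < π)
    (hs : Real.cos s < k) :
    t * (Real.cos t / Real.sin t + Real.sin t / (k - Real.cos t))
      < s * (Real.cos s / Real.sin s + Real.sin s / (k - Real.cos s)) := by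
  have hcos : ∀ z ∈ Icc s t, Real.cos z < k := fun z hz =>
    lt_of_le_of_lt (Real.cos_le_cos_of_nonneg_of_le_pi h0.le (hz.2.trans h1.le) hz.1) hs
  have hsin : ∀ z ∈ Icc s t, 0 < Real.sin z := fun z hz =>
    Real.sin_pos_of_pos_of_lt_pi (h0.trans_le hz.1) (hz.2.trans_lt h1)
  have hder : ∀ z ∈ Icc s t, HasDerivAt
      (fun z => z * (Real.cos z / Real.sin z + Real.sin z / (k - Real.cos z)))
      ((Real.sin z * Real.cos z - z) / Real.sin z ^ 2
        + (Real.sin z * (k - Real.cos z) + z * (k * Real.cos z - 1)) / (k - Real.cos z) ^ 2) z := by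
    intro z hz
    have e1 := (hsin z hz).ne'
    have e2 : k - Real.cos z ≠ 0 := by have := hcos z hz; linarith
    have A := (Real.hasDerivAt_cos z).div (Real.hasDerivAt_sin z) e1
    have B := (Real.hasDerivAt_sin z).div ((Real.hasDerivAt_cos z).const_sub k) e2
    have C := (hasDerivAt_id z).mul (A.add B)
    refine HasDerivAt.congr_deriv C ?_
    have := Real.sin_sq_add_cos_sq z
    have h : Real.cos z ^ 2 = 1 - Real.sin z ^ 2 := by linarith
    have h' : -Real.sin z * Real.sin z - Real.cos z * Real.cos z = -1 := by linarith
    have h'' : Real.cos z * (k - Real.cos z) - Real.sin z * - -Real.sin z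
      = k * Real.cos z - 1 := by linarith
    simp only [id, h', h'', Pi.add_apply, Pi.div_apply]
    field_simp
    ring
  refine mv_gt (f := fun z => z * (Real.cos z / Real.sin z + Real.sin z / (k - Real.cos z))) hst
    (fun z hz => (hder z hz).continuousAt.continuousWithinAt)
    (fun z hz => hder z (Ioo_subset_Icc_self hz)) ?_
  intro z hz
  have hz' := Ioo_subset_Icc_self hz
  have e1 := hsin z hz'
  have e2 : 0 < k - Real.cos z := by have := hcos z hz'; linarith
  have z0 : 0 < z := h0.trans hz.1
  have l1 : Real.sin z < z := Real.sin_lt z0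
  have c1 := Real.cos_le_one z
  have c2 := Real.neg_one_le_cos z
  have p1 : Real.sin z * Real.cos z - z < 0 := by nlinarith
  have p2 : Real.sin z * (k - Real.cos z) + z * (k * Real.cos z - 1) < 0 := by
    have q0 : 0 < Real.sin z * Real.cos z + z := by nlinarith
    have q1 : 0 ≤ (z - Real.sin z) * (1 - Real.cos z) := mul_nonneg (by linarith) (by linarith)
    nlinarith [mul_pos (sub_pos.2 hk1) q0, mul_nonneg hk0.le q1]
  have := div_neg_of_neg_of_pos p1 (pow_pos e1 2)
  have := div_neg_of_neg_of_pos p2 (pow_pos e2 2)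
  linarith

/-- single sign change of `α x F' - μ F`. -/
lemma J_sign {a b al mu x y : ℝ} (hb : 0 < b) (hab : 2 * b < a) (h : (0 ≤ al ∧ al < mu) ∨ (0 < al ∧ al ≤ mu))
    (hx : 0 < x) (hxy : x < y) (hy : y < π / 2)
    (hJ : al * (x * Fd a b x) - mu * Fnl a b x ≤ 0) :
    al * (y * Fd a b y) - mu * Fnl a b y < 0 := by
  have ha : 0 < a := by linarith
  rw [Fd_eq ha, Fnl_eq ha] at *
  have hk0 : 0 < 1 - 2 * (b / a) := by
    have : b / a < 1 / 2 := by rw [div_lt_iff₀ ha]; linarith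
    linarith
  have hk1 : 1 - 2 * (b / a) < 1 := by have := div_pos hb ha; linarith
  set k := 1 - 2 * (b / a) with hk
  set s := 2 * x with hs
  set t := 2 * y with ht
  have s0 : 0 < s := by linarith
  have hst : s < t := by linarith
  have ht1 : t < π := by linarith
  have sins := Real.sin_pos_of_pos_of_lt_pi s0 (hst.trans ht1)
  have sint := Real.sin_pos_of_pos_of_lt_pi (s0.trans hst) ht1
  have hcos : Real.cos t < Real.cos s := Real.cos_lt_cos_of_nonneg_of_le_pi s0.le ht1.le hst
  have hJ' : al * (s * (k * Real.cos s - Real.cos s ^ 2 + Real.sin s ^ 2))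
      - mu * (Real.sin s * (k - Real.cos s)) ≤ 0 := by
    have : (a / 4) * (al * (s * (k * Real.cos s - Real.cos s ^ 2 + Real.sin s ^ 2))
      - mu * (Real.sin s * (k - Real.cos s))) ≤ 0 := by
      refine le_trans (le_of_eq ?_) hJ
      rw [hs]; ring
    by_contra hc
    push Not at hc
    have := mul_pos (show 0 < a / 4 by linarith) hc
    linarith
  suffices hG : al * (t * (k * Real.cos t - Real.cos t ^ 2 + Real.sin t ^ 2))
      - mu * (Real.sin t * (k - Real.cos t)) < 0 by
    have := mul_neg_of_pos_of_neg (show 0 < a / 4 by linarith) hG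
    refine lt_of_eq_of_lt ?_ this
    rw [ht]; ring
  have hmu : 0 < mu := by rcases h with h | h <;> linarith
  have hal : 0 ≤ al := by rcases h with h | h <;> linarith
  rcases hal.eq_or_lt with h00 | hal
  · subst h00
    have e : k - Real.cos s ≥ 0 := by
      by_contra hc
      push Not at hc
      have := mul_neg_of_pos_of_neg sins hc
      nlinarith
    have : 0 < Real.sin t * (k - Real.cos t) := mul_pos sint (by linarith)
    nlinarith
  have hle : al ≤ mu := by rcases h with h | h <;> linarith
  have hcs : Real.cos s < k := by
    by_contra hc
    push Not at hc
    have i1 := I1_pos s0 (hst.trans ht1) hc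
    have : Real.sin s * (k - Real.cos s) ≤ 0 :=
      mul_nonpos_of_nonneg_of_nonpos sins.le (by linarith)
    nlinarith
  have R := ratio_anti hk0 hk1 s0 hst ht1 hcs
  have ds : 0 < Real.sin s * (k - Real.cos s) := mul_pos sins (by linarith)
  have dt : 0 < Real.sin t * (k - Real.cos t) := mul_pos sint (by linarith)
  have key : ∀ z, 0 < Real.sin z → 0 < k - Real.cos z →
      z * (k * Real.cos z - Real.cos z ^ 2 + Real.sin z ^ 2)
       = (z * (Real.cos z / Real.sin z + Real.sin z / (k - Real.cos z)))
          * (Real.sin z * (k - Real.cos z)) := by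
    intro z h1 h2
    field_simp
  rw [key s sins (by linarith)] at hJ'
  rw [key t sint (by linarith)]
  set hs' := s * (Real.cos s / Real.sin s + Real.sin s / (k - Real.cos s))
  set ht' := t * (Real.cos t / Real.sin t + Real.sin t / (k - Real.cos t))
  have k1 : al * hs' ≤ mu := by
    by_contra hc
    push Not at hc
    nlinarith [mul_pos (sub_pos.2 hc) ds]
  have k2 : al * ht' < mu := lt_of_lt_of_le (mul_lt_mul_of_pos_left R hal) k1
  nlinarith [mul_pos (sub_pos.2 k2) dt]

/-- if `x F' - F ≤ 0` then `F > 0`. -/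
lemma F_pos_of_I1 {a b x : ℝ} (hb : 0 < b) (hab : 2 * b < a) (hx : 0 < x) (hx1 : x < π / 2)
    (hJ : x * Fd a b x - Fnl a b x ≤ 0) : 0 < Fnl a b x := by
  have ha : 0 < a := by linarith
  rw [Fd_eq ha, Fnl_eq ha] at *
  set k := 1 - 2 * (b / a) with hk
  have s0 : 0 < 2 * x := by linarith
  have s1 : 2 * x < π := by linarith
  have sins := Real.sin_pos_of_pos_of_lt_pi s0 s1
  have hcs : Real.cos (2 * x) < k := by
    by_contra hc
    push Not at hc
    have i1 := I1_pos s0 s1 hc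
    have := mul_pos (show 0 < a / 4 by linarith) (sub_pos.2 i1)
    nlinarith
  exact mul_pos (by linarith) (mul_pos sins (by linarith))

lemma F_pos_of_G {a b x : ℝ} (hb : 0 < b) (hab : 2 * b < a) (hx : 0 < x) (hx1 : x < π / 2)
    (hG : 0 ≤ Gn a b x) : 0 < Fnl a b x := by
  have ha : 0 < a := by linarith
  have s0 : 0 < Real.sin x := Real.sin_pos_of_pos_of_lt_pi hx (by linarith)
  have c0 : 0 < Real.cos x := Real.cos_pos_of_mem_Ioo ⟨by linarith, hx1⟩
  unfold Gn at hG
  unfold Fnl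
  have : b / a < Real.sin x ^ 2 := by
    rw [div_lt_iff₀ ha]
    by_contra hc
    push Not at hc
    have : 0 < Real.sin x ^ 2 := by positivity
    nlinarith [mul_pos this hb]
  rw [Real.sin_two_mul]
  have : 0 < Real.sin x ^ 2 - b / a := by linarith
  positivity

lemma G_le {a b : ℝ} (hb : 0 < b) (hab : 2 * b < a) (x : ℝ) : Gn a b x ≤ (a - 2 * b) / 4 := by
  unfold Gn
  have h1 := Real.sin_sq_le_one x
  have h0 := sq_nonneg (Real.sin x)
  rw [show Real.sin x ^ 4 = (Real.sin x ^ 2) ^ 2 by ring]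
  nlinarith [mul_nonneg (sub_nonneg.2 h1) (show 0 ≤ a * Real.sin x ^ 2 + a - 2 * b by nlinarith)]

lemma abs_F_le {a b : ℝ} (hb : 0 < b) (hab : 2 * b < a) (x : ℝ) : |Fnl a b x| ≤ a * |x| := by
  have ha : 0 < a := by linarith
  unfold Fnl
  rw [abs_mul, abs_mul, abs_of_pos (show 0 < a / 2 by linarith)]
  have h1 : |Real.sin (2 * x)| ≤ 2 * |x| := by
    have := Real.abs_sin_le_abs (x := 2 * x); rwa [abs_mul, abs_two] at this
  have hba : b / a < 1 := by rw [div_lt_one ha]; linarith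
  have hba0 : 0 < b / a := div_pos hb ha
  have h2 : |Real.sin x ^ 2 - b / a| ≤ 1 := by
    rw [abs_le]; constructor <;> nlinarith [Real.sin_sq_le_one x, sq_nonneg (Real.sin x)]
  calc a / 2 * |Real.sin (2 * x)| * |Real.sin x ^ 2 - b / a|
      ≤ a / 2 * (2 * |x|) * 1 := by gcongr
    _ = a * |x| := by ring

lemma F_half_le {a b w : ℝ} (hb : 0 < b) (hab : 2 * b < a) (hw : 0 ≤ w) :
    Fnl a b (π / 2 - w) ≤ a * w := by
  have ha : 0 < a := by linarith
  unfold Fnl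
  rw [show 2 * (π / 2 - w) = π - 2 * w by ring, Real.sin_pi_sub]
  have hba : b / a < 1 := by rw [div_lt_one ha]; linarith
  have hba0 : 0 < b / a := div_pos hb ha
  have h1 : |Real.sin (2 * w)| ≤ 2 * w := by
    have := Real.abs_sin_le_abs (x := 2 * w); rwa [abs_of_nonneg (show 0 ≤ 2 * w by linarith)] at this
  have h2 : |Real.sin (π / 2 - w) ^ 2 - b / a| ≤ 1 := by
    rw [abs_le]; constructor <;>
      nlinarith [Real.sin_sq_le_one (π / 2 - w), sq_nonneg (Real.sin (π / 2 - w))]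
  refine (le_abs_self _).trans ?_
  rw [abs_mul, abs_mul, abs_of_pos (show 0 < a / 2 by linarith)]
  calc a / 2 * |Real.sin (2 * w)| * |Real.sin (π / 2 - w) ^ 2 - b / a|
      ≤ a / 2 * (2 * w) * 1 := by gcongr
    _ = a * w := by ring

lemma abs_G_le {a b : ℝ} (hb : 0 < b) (hab : 2 * b < a) (x : ℝ) : |Gn a b x| ≤ a * |x| := by
  have ha : 0 < a := by linarith
  have e : Gn a b x = Real.sin x * (Real.sin x * (a / 4 * Real.sin x ^ 2 - b / 2)) := by
    unfold Gn; ring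
  rw [e, abs_mul]
  have h1 : |Real.sin x| ≤ |x| := Real.abs_sin_le_abs
  have h2 : |Real.sin x * (a / 4 * Real.sin x ^ 2 - b / 2)| ≤ a := by
    rw [abs_mul]
    have h3 := Real.abs_sin_le_one x
    have h4 : |a / 4 * Real.sin x ^ 2 - b / 2| ≤ a := by
      rw [abs_le]; constructor <;> nlinarith [Real.sin_sq_le_one x, sq_nonneg (Real.sin x)]
    calc _ ≤ 1 * a := by gcongr
      _ = a := one_mul a
  calc _ ≤ |x| * a := by gcongr
    _ = a * |x| := mul_comm _ _

lemma F_zero (a b : ℝ) : Fnl a b 0 = 0 := by simp [Fnl]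
lemma G_zero (a b : ℝ) : Gn a b 0 = 0 := by simp [Gn]
lemma Fd_zero {a : ℝ} (ha : 0 < a) (b : ℝ) : Fd a b 0 = -b := by simp [Fd]; field_simp

structure GS (n : ℕ) (a b : ℝ) (Q P : ℝ → ℝ) : Prop where
  hb : 0 < b
  hab : 2 * b < a
  dQ : ∀ r, HasDerivAt Q (P r) r
  cP : Continuous P
  dP : ∀ r, 0 < r → HasDerivAt P (-(n / r) * P r - Fnl a b (Q r)) r
  P0 : P 0 = 0
  pos : ∀ r, 0 ≤ r → 0 < Q r
  anti : StrictAntiOn Q (Ici 0)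
  limQ : Tendsto Q atTop (𝓝 0)
  limP : Tendsto P atTop (𝓝 0)

lemma hasDerivAt_pow' (n : ℕ) {r : ℝ} (hr : 0 < r) :
    HasDerivAt (fun r : ℝ => r ^ n) (n / r * r ^ n) r := by
  refine (hasDerivAt_pow n r).congr_deriv ?_
  rcases n with _ | n
  · simp
  · simp; field_simp; ring

lemma ge_of_anti_tendsto {f : ℝ → ℝ} {R l : ℝ} (h : ∀ x y, R ≤ x → x ≤ y → f y ≤ f x)
    (hl : Tendsto f atTop (𝓝 l)) {x : ℝ} (hx : R ≤ x) : l ≤ f x :=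
  le_of_tendsto hl (by filter_upwards [eventually_ge_atTop x] with y hy using h x y hx hy)

namespace GS

variable {n : ℕ} {a b : ℝ} {Q P : ℝ → ℝ}

lemma ha (h : GS n a b Q P) : 0 < a := by have := h.hb; have := h.hab; linarith

lemma cQ (h : GS n a b Q P) : Continuous Q :=
  continuous_iff_continuousAt.2 fun r => (h.dQ r).continuousAt

lemma dF (h : GS n a b Q P) (r : ℝ) :
    HasDerivAt (fun r => Fnl a b (Q r)) (Fd a b (Q r) * P r) r :=
  (hasDerivAt_Fnl a b (Q r)).comp r (h.dQ r)

lemma dG (h : GS n a b Q P) (r : ℝ) :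
    HasDerivAt (fun r => Gn a b (Q r)) (Fnl a b (Q r) * P r) r :=
  (hasDerivAt_Gn h.ha b (Q r)).comp r (h.dQ r)

lemma cF (h : GS n a b Q P) : Continuous (fun r => Fnl a b (Q r)) := (continuous_Fnl a b).comp h.cQ
lemma cG (h : GS n a b Q P) : Continuous (fun r => Gn a b (Q r)) := (continuous_Gn a b).comp h.cQ

lemma E_anti (h : GS n a b Q P) {x y : ℝ} (hx : 0 ≤ x) (hxy : x ≤ y) :
    P y ^ 2 / 2 + Gn a b (Q y) ≤ P x ^ 2 / 2 + Gn a b (Q x) := by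
  have := h.cP
  have := h.cG
  refine mv_ge (f := fun r => P r ^ 2 / 2 + Gn a b (Q r)) (f' := fun r => -(n / r) * P r ^ 2)
    hxy (by fun_prop) ?_ ?_
  · intro z hz
    have hz0 : 0 < z := hx.trans_lt hz.1
    refine ((((h.dP z hz0).pow 2).div_const 2).add (h.dG z)).congr_deriv ?_
    push_cast; ring
  · intro z hz
    have hz0 : 0 < z := hx.trans_lt hz.1
    have : 0 ≤ (n / z) * P z ^ 2 := by positivity
    linarith

lemma E_lim (h : GS n a b Q P) :
    Tendsto (fun r => P r ^ 2 / 2 + Gn a b (Q r)) atTop (𝓝 0) := by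
  have h1 := (h.limP.pow 2).div_const 2
  have h2 := ((continuous_Gn a b).tendsto 0).comp h.limQ
  rw [G_zero] at h2
  simpa using h1.add h2

lemma E_nonneg (h : GS n a b Q P) {x : ℝ} (hx : 0 ≤ x) : 0 ≤ P x ^ 2 / 2 + Gn a b (Q x) :=
  ge_of_anti_tendsto (f := fun r => P r ^ 2 / 2 + Gn a b (Q r)) (R := 0)
    (fun _ _ h1 h2 => h.E_anti h1 h2) h.E_lim hx

lemma P_nonpos (h : GS n a b Q P) {x : ℝ} (hx : 0 ≤ x) : P x ≤ 0 := by
  by_contra hc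
  push Not at hc
  have hev : ∀ᶠ y in 𝓝[>] x, 0 < P y :=
    (h.cP.continuousAt.eventually (lt_mem_nhds hc)).filter_mono nhdsWithin_le_nhds
  obtain ⟨u, hu, hu2⟩ := mem_nhdsGT_iff_exists_Ioo_subset.1 hev
  have hu : x < u := hu
  have := mv_lt (f := Q) (f' := P) (x := x) (y := (x + u) / 2) (by linarith) h.cQ.continuousOn
    (fun z _ => h.dQ z) (fun z hz => hu2 ⟨hz.1, by have := hz.2; linarith⟩)
  have := h.anti hx (show (0:ℝ) ≤ (x + u) / 2 by linarith) (show x < (x + u) / 2 by linarith)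
  linarith

lemma lt_half (h : GS n a b Q P) {x : ℝ} (hx : 0 ≤ x) : Q x < π / 2 := by
  have hb := h.hb
  have hab := h.hab
  have ha := h.ha
  suffices h0 : Q 0 < π / 2 by
    rcases hx.eq_or_lt with rfl | hx'
    · exact h0
    · exact (h.anti (by simp) hx hx').trans h0
  by_contra hc
  push Not at hc
  obtain ⟨M, hM0, hM⟩ : ∃ M, 0 ≤ M ∧ Q M < π / 2 := by
    have := (h.limQ.eventually (gt_mem_nhds (show (0:ℝ) < π / 2 by positivity))).and
      (eventually_ge_atTop 0)
    obtain ⟨M, h1, h2⟩ := this.exists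
    exact ⟨M, h2, h1⟩
  obtain ⟨r1, hr1, hQ1⟩ := intermediate_value_Icc' hM0 h.cQ.continuousOn ⟨hM.le, hc⟩
  have hr10 : 0 ≤ r1 := hr1.1
  have hP1 : P r1 = 0 := by
    have h1 := h.E_anti le_rfl hr10
    have h2 := G_le hb hab (Q 0)
    rw [h.P0, hQ1] at h1
    have h3 : Gn a b (π / 2) = (a - 2 * b) / 4 := by simp [Gn]; ring
    rw [h3] at h1
    have : P r1 ^ 2 ≤ 0 := by nlinarith
    have := pow_eq_zero_iff (n := 2) (by norm_num) |>.1 (le_antisymm this (sq_nonneg _))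
    exact this
  have hw : ∀ z, r1 < z → 0 ≤ π / 2 - Q z := fun z hz => by
    have := h.anti hr10 (show (0:ℝ) ≤ z by linarith) hz
    linarith
  have := h.cP
  have := h.cQ
  have key : ∀ z, r1 < z → - P z ≤ a * (z - r1) * (π / 2 - Q z) := by
    intro z hz
    have hm := mv_ge (f := fun r => r ^ n * (- P r - a * (r - r1) * (π / 2 - Q r)))
      (f' := fun r => r ^ n * (Fnl a b (Q r) - a * (π / 2 - Q r) - a * (n / r) * (r - r1) * (π / 2 - Q r)
        + a * (r - r1) * P r)) hz.le (by fun_prop) ?_ ?_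
    · simp only [hP1, sub_self] at hm
      have hz0 : 0 < z ^ n := pow_pos (by linarith) n
      have : z ^ n * (- P z - a * (z - r1) * (π / 2 - Q z)) ≤ 0 := by simpa using hm
      have := nonpos_of_mul_nonpos_right this hz0
      linarith
    · intro y hy
      have hy0 : 0 < y := by linarith [hy.1]
      have e1 := (((hasDerivAt_id y).sub_const r1).const_mul a).mul ((h.dQ y).const_sub (π / 2))
      refine ((hasDerivAt_pow' n hy0).mul ((h.dP y hy0).neg.sub e1)).congr_deriv ?_
      simp only [id, Pi.mul_apply, Pi.sub_apply, Pi.neg_apply]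
      field_simp
      ring
    · intro y hy
      have hy0 : 0 < y := by linarith [hy.1]
      have hwy := hw y hy.1
      refine mul_nonpos_of_nonneg_of_nonpos (by positivity) ?_
      have f1 := F_half_le hb hab hwy
      rw [sub_sub_cancel] at f1
      have f2 : 0 ≤ a * (n / y) * (y - r1) * (π / 2 - Q y) :=
        mul_nonneg (mul_nonneg (by positivity) (by linarith [hy.1])) hwy
      have f3 : a * (y - r1) * P y ≤ 0 :=
        mul_nonpos_of_nonneg_of_nonpos (mul_nonneg ha.le (by linarith [hy.1])) (h.P_nonpos hy0.le)
      linarith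
  have hm := mv_ge (f := fun r => (π / 2 - Q r) * Real.exp (-(a / 2 * (r - r1) ^ 2)))
    (f' := fun r => (- P r - a * (r - r1) * (π / 2 - Q r)) * Real.exp (-(a / 2 * (r - r1) ^ 2)))
    (show r1 ≤ r1 + 1 by linarith) (by fun_prop) ?_ ?_
  · simp only [hQ1, sub_self, zero_mul] at hm
    have := nonpos_of_mul_nonpos_left hm (Real.exp_pos _)
    have := h.anti hr10 (show (0:ℝ) ≤ r1 + 1 by linarith) (show r1 < r1 + 1 by linarith)
    linarith
  · intro y hy
    have e2 := ((((hasDerivAt_id y).sub_const r1).pow 2).const_mul (a / 2)).neg.exp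
    refine (((h.dQ y).const_sub (π / 2)).mul e2).congr_deriv ?_
    simp only [id, Pi.mul_apply, Pi.sub_apply, Pi.neg_apply, Pi.pow_apply]
    push_cast
    ring
  · intro y hy
    exact mul_nonpos_of_nonpos_of_nonneg (by linarith [key y hy.1]) (Real.exp_pos _).le

lemma P_neg (h : GS n a b Q P) {x : ℝ} (hx : 0 < x) : P x < 0 := by
  refine (h.P_nonpos hx.le).lt_of_ne fun h0 => ?_
  have hE := h.E_nonneg hx.le
  rw [h0] at hE
  have hF := F_pos_of_G h.hb h.hab (h.pos x hx.le) (h.lt_half hx.le) (by simpa using hE)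
  have hmax : IsLocalMax P x := by
    filter_upwards [lt_mem_nhds hx] with y hy
    rw [h0]; exact h.P_nonpos hy.le
  have := hmax.hasDerivAt_eq_zero (h.dP x hx)
  rw [h0] at this
  linarith

lemma F0_pos (h : GS n a b Q P) : 0 < Fnl a b (Q 0) := by
  have hE := h.E_nonneg le_rfl
  rw [h.P0] at hE
  exact F_pos_of_G h.hb h.hab (h.pos 0 le_rfl) (h.lt_half le_rfl) (by simpa using hE)

/-- far away, the linearized potential is `≤ -b/2`. -/
lemma far (h : GS n a b Q P) : ∃ R, 0 < R ∧ ∀ r, R ≤ r →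
    Fd a b (Q r) ≤ -(b / 2) ∧ Fnl a b (Q r) ≤ - (b / 2) * Q r := by
  have hb := h.hb
  have h1 : ∀ᶠ x in 𝓝 (0:ℝ), Fd a b x < -(b / 2) := by
    refine (continuous_Fd a b).continuousAt.eventually (gt_mem_nhds ?_)
    rw [Fd_zero h.ha]; linarith
  obtain ⟨δ, hδ, hδ2⟩ := Metric.eventually_nhds_iff.1 h1
  have h2 := h.limQ.eventually (gt_mem_nhds hδ)
  obtain ⟨R, hR⟩ := eventually_atTop.1 h2
  refine ⟨max R 1, by positivity, fun r hr => ?_⟩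
  have hr0 : 0 ≤ r := by have := le_max_right R 1; linarith
  have hrR : Q r < δ := hR r ((le_max_left _ _).trans hr)
  have hp := h.pos r hr0
  have hd : ∀ x, 0 ≤ x → x ≤ Q r → Fd a b x < -(b / 2) := fun x hx hx2 =>
    hδ2 (by rw [Real.dist_eq, sub_zero, abs_of_nonneg hx]; linarith)
  refine ⟨(hd _ hp.le le_rfl).le, ?_⟩
  have hm := mv_gt (f := fun x => Fnl a b x + b / 2 * x) (f' := fun x => Fd a b x + b / 2) hp
    (by have := continuous_Fnl a b; fun_prop) (fun z _ => by
      refine ((hasDerivAt_Fnl a b z).add ((hasDerivAt_id z).const_mul (b / 2))).congr_deriv ?_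
      simp) (fun z hz => by have := hd z hz.1.le hz.2.le; linarith)
  simp only [F_zero] at hm
  linarith

lemma decay (h : GS n a b Q P) : ∃ C ε : ℝ, 0 < ε ∧ ∀ᶠ r in atTop,
    Q r ≤ C * Real.exp (-(ε * r)) ∧ - P r ≤ C * Real.exp (-(ε * r)) := by
  obtain ⟨R, hR0, hR⟩ := h.far
  have hb := h.hb
  have := h.cP
  have := h.cQ
  set ε := Real.sqrt (b / 2) with hε
  have hε0 : 0 < ε := Real.sqrt_pos.2 (by linarith)
  have hε2 : ε ^ 2 = b / 2 := Real.sq_sqrt (by linarith)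
  have hD : ∀ x, R ≤ x → 0 ≤ P x ^ 2 - b / 2 * Q x ^ 2 := by
    intro x hx
    refine ge_of_anti_tendsto (f := fun r => P r ^ 2 - b / 2 * Q r ^ 2) (R := R) ?_ ?_ hx
    · intro x y hx hxy
      refine mv_ge (f := fun r => P r ^ 2 - b / 2 * Q r ^ 2)
        (f' := fun r => -2 * (n / r) * P r ^ 2 - 2 * P r * (Fnl a b (Q r) + b / 2 * Q r)) hxy
        (by fun_prop) ?_ ?_
      · intro z hz
        have hz0 : 0 < z := by linarith [hz.1]
        refine (((h.dP z hz0).pow 2).sub (((h.dQ z).pow 2).const_mul (b / 2))).congr_deriv ?_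
        push_cast; ring
      · intro z hz
        have hz0 : 0 < z := by linarith [hz.1]
        have h1 : 0 ≤ (n / z) * P z ^ 2 := by positivity
        have h2 := (hR z (by linarith [hz.1])).2
        have h3 := mul_nonneg_of_nonpos_of_nonpos (h.P_neg hz0).le
          (show Fnl a b (Q z) + b / 2 * Q z ≤ 0 by linarith)
        linarith
    · simpa using (h.limP.pow 2).sub ((h.limQ.pow 2).const_mul (b / 2))
  have hPQ : ∀ x, R ≤ x → P x + ε * Q x ≤ 0 := by
    intro x hx
    have h1 := hD x hx
    rw [← hε2, ← mul_pow] at h1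
    have h2 := h.P_neg (hR0.trans_le hx)
    have h3 := mul_pos hε0 (h.pos x (hR0.le.trans hx))
    nlinarith
  have hQe : ∀ x, R ≤ x → Q x ≤ Q R * Real.exp (ε * R) * Real.exp (-(ε * x)) := by
    intro x hx
    have hm := mv_ge (f := fun r => Q r * Real.exp (ε * r))
      (f' := fun r => (P r + ε * Q r) * Real.exp (ε * r)) hx (by fun_prop) (fun z hz => by
        refine ((h.dQ z).mul ((hasDerivAt_id z).const_mul ε).exp).congr_deriv ?_
        simp only [id]; ring) (fun z hz => mul_nonpos_of_nonpos_of_nonneg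
          (hPQ z hz.1.le) (Real.exp_pos _).le)
    rw [Real.exp_neg, ← div_eq_mul_inv, le_div_iff₀ (Real.exp_pos _)]
    exact hm
  have hPm : ∀ x y, R ≤ x → x ≤ y → P x ≤ P y := by
    intro x y hx hxy
    refine mv_le hxy (by fun_prop) (fun z hz => h.dP z (by linarith [hz.1])) ?_
    intro z hz
    have hz0 : 0 < z := by linarith [hz.1]
    have h1 : (n / z) * P z ≤ 0 := mul_nonpos_of_nonneg_of_nonpos (by positivity) (h.P_neg hz0).le
    have h2 := (hR z (by linarith [hz.1])).2
    have h3 := mul_pos hb (h.pos z hz0.le)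
    linarith
  set C := Q R * Real.exp (ε * R) with hC
  have hC0 : 0 < C := mul_pos (h.pos R hR0.le) (Real.exp_pos _)
  refine ⟨C * Real.exp ε, ε, hε0, ?_⟩
  filter_upwards [eventually_ge_atTop (R + 1)] with r hr
  constructor
  · refine (hQe r (by linarith)).trans ?_
    have : 1 ≤ Real.exp ε := Real.one_le_exp hε0.le
    gcongr
    nlinarith
  · obtain ⟨c, hc1, hc2⟩ := exists_hasDerivAt_eq_slope Q P (show r - 1 < r by linarith)
      h.cQ.continuousOn (fun z _ => h.dQ z)
    have h1 := hPm c r (by linarith [hc1.1]) hc1.2.le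
    have h2 := hQe (r - 1) (by linarith)
    have h3 := h.pos r (by linarith)
    rw [show r - (r - 1) = 1 by ring, div_one] at hc2
    rw [show -(ε * (r - 1)) = ε + -(ε * r) by ring, Real.exp_add, ← mul_assoc] at h2
    linarith

lemma pow_exp (k : ℕ) {C ε : ℝ} (hε : 0 < ε) :
    Tendsto (fun r : ℝ => r ^ k * (C * Real.exp (-(ε * r)))) atTop (𝓝 0) := by
  have h1 := (isLittleO_pow_exp_pos_mul_atTop k hε).tendsto_div_nhds_zero
  have h2 := h1.const_mul C
  rw [mul_zero] at h2
  refine h2.congr fun r => ?_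
  rw [Real.exp_neg]; field_simp

lemma dec_Q (h : GS n a b Q P) (k : ℕ) : Tendsto (fun r => r ^ k * Q r) atTop (𝓝 0) := by
  obtain ⟨C, ε, hε, hev⟩ := h.decay
  refine tendsto_of_tendsto_of_tendsto_of_le_of_le' tendsto_const_nhds (pow_exp (C := C) k hε) ?_ ?_
  · filter_upwards [eventually_ge_atTop 0] with r hr
    exact mul_nonneg (by positivity) (h.pos r hr).le
  · filter_upwards [hev, eventually_ge_atTop 0] with r hr hr0
    exact mul_le_mul_of_nonneg_left hr.1 (by positivity)

lemma dec_P (h : GS n a b Q P) (k : ℕ) : Tendsto (fun r => r ^ k * P r) atTop (𝓝 0) := by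
  obtain ⟨C, ε, hε, hev⟩ := h.decay
  have : Tendsto (fun r => r ^ k * -P r) atTop (𝓝 0) := by
    refine tendsto_of_tendsto_of_tendsto_of_le_of_le' tendsto_const_nhds (pow_exp (C := C) k hε) ?_ ?_
    · filter_upwards [eventually_ge_atTop 0] with r hr
      exact mul_nonneg (by positivity) (by linarith [h.P_nonpos hr])
    · filter_upwards [hev, eventually_ge_atTop 0] with r hr hr0
      exact mul_le_mul_of_nonneg_left hr.2 (by positivity)
  simpa using this.neg

lemma dec_of_le (h : GS n a b Q P) (k : ℕ) {g : ℝ → ℝ} {C : ℝ} (hg : ∀ x, |g x| ≤ C * |x|) :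
    Tendsto (fun r => r ^ k * g (Q r)) atTop (𝓝 0) := by
  have h1 := (h.dec_Q k).const_mul C
  rw [mul_zero] at h1
  refine squeeze_zero_norm' ?_ h1
  filter_upwards [eventually_ge_atTop 0] with r hr
  rw [Real.norm_eq_abs, abs_mul, abs_of_nonneg (show 0 ≤ r ^ k by positivity)]
  have := hg (Q r)
  rw [abs_of_pos (h.pos r hr)] at this
  calc _ ≤ r ^ k * (C * Q r) := mul_le_mul_of_nonneg_left this (by positivity)
    _ = _ := by ring

lemma dec_F (h : GS n a b Q P) (k : ℕ) : Tendsto (fun r => r ^ k * Fnl a b (Q r)) atTop (𝓝 0) :=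
  h.dec_of_le k (abs_F_le h.hb h.hab)

lemma dec_G (h : GS n a b Q P) (k : ℕ) : Tendsto (fun r => r ^ k * Gn a b (Q r)) atTop (𝓝 0) :=
  h.dec_of_le k (abs_G_le h.hb h.hab)

end GS

/-! ### Pohozaev and monotonicity of `-rQ'/Q` -/

lemma H_sign {n : ℕ} (hn : 1 ≤ n) {a b x y : ℝ} (hb : 0 < b) (hab : 2 * b < a) (hx : 0 < x)
    (hxy : x < y) (hy : y < π / 2)
    (hH : 0 ≤ (n + 1) * Gn a b x - (n - 1) / 2 * (x * Fnl a b x)) :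
    0 < (n + 1) * Gn a b y - (n - 1) / 2 * (y * Fnl a b y) := by
  have ha : 0 < a := by linarith
  have hn' : (1:ℝ) ≤ n := by exact_mod_cast hn
  have hder : ∀ z, HasDerivAt (fun z => (n + 1) * Gn a b z - (n - 1) / 2 * (z * Fnl a b z))
      (-(1 / 2) * ((n - 1) * (z * Fd a b z) - (n + 3) * Fnl a b z)) z := by
    intro z
    refine (((hasDerivAt_Gn ha b z).const_mul (n + 1 : ℝ)).sub
      (((hasDerivAt_id z).mul (hasDerivAt_Fnl a b z)).const_mul ((n - 1) / 2 : ℝ))).congr_deriv ?_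
    simp only [id]; ring
  have hcont : Continuous (fun z => (n + 1) * Gn a b z - (n - 1) / 2 * (z * Fnl a b z)) :=
    continuous_iff_continuousAt.2 fun z => (hder z).continuousAt
  obtain ⟨z, hz, hz2⟩ := exists_hasDerivAt_eq_slope _ _ hx hcont.continuousOn (fun z _ => hder z)
  have h1 : ((n:ℝ) - 1) * (z * Fd a b z) - (n + 3) * Fnl a b z ≤ 0 := by
    have : 0 ≤ -(1 / 2) * (((n:ℝ) - 1) * (z * Fd a b z) - (n + 3) * Fnl a b z) := by
      rw [hz2]
      simp only [G_zero, F_zero]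
      exact div_nonneg (by simpa using hH) (by linarith)
    linarith
  have h2 := mv_lt hxy hcont.continuousOn (fun z _ => hder z) (fun w hw => by
    have := J_sign (al := (n:ℝ) - 1) (mu := n + 3) hb hab (Or.inl ⟨by linarith, by linarith⟩) hz.1
      (hz.2.trans hw.1) (hw.2.trans hy) h1
    linarith)

  linarith

lemma M_sign {a b x y : ℝ} (hb : 0 < b) (hab : 2 * b < a) (hx : 0 < x)
    (hxy : x ≤ y) (hy : y < π / 2) (hM : 0 < 2 * Gn a b x - x * Fnl a b x) :
    y * Fd a b y - Fnl a b y < 0 := by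
  have ha : 0 < a := by linarith
  have hder : ∀ z, HasDerivAt (fun z => 2 * Gn a b z - z * Fnl a b z)
      (-(z * Fd a b z - Fnl a b z)) z := by
    intro z
    refine (((hasDerivAt_Gn ha b z).const_mul 2).sub
      ((hasDerivAt_id z).mul (hasDerivAt_Fnl a b z))).congr_deriv ?_
    simp only [id]; ring
  have hcont : Continuous (fun z => 2 * Gn a b z - z * Fnl a b z) :=
    continuous_iff_continuousAt.2 fun z => (hder z).continuousAt
  obtain ⟨z, hz, hz2⟩ := exists_hasDerivAt_eq_slope _ _ hx hcont.continuousOn (fun z _ => hder z)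
  have h1 : z * Fd a b z - Fnl a b z ≤ 0 := by
    have : 0 ≤ -(z * Fd a b z - Fnl a b z) := by
      rw [hz2]
      simp only [G_zero, F_zero]
      exact div_nonneg (by simpa using hM.le) (by linarith)
    linarith
  have := J_sign (al := 1) (mu := 1) hb hab (Or.inr ⟨by norm_num, le_rfl⟩) hz.1
      (hz.2.trans_le hxy) hy (by simpa using h1)
  simpa using this

namespace GS

variable {n : ℕ} {a b : ℝ} {Q P : ℝ → ℝ}

lemma poh_pos (h : GS n a b Q P) (hn : 1 ≤ n) {r : ℝ} (hr : 0 < r) :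
    0 < r ^ (n + 1) * (P r ^ 2 / 2 + Gn a b (Q r)) + (n - 1) / 2 * (r ^ n * (Q r * P r)) := by
  have hb := h.hb
  have hab := h.hab
  have := h.cP
  have := h.cQ
  have := h.cG
  set f : ℝ → ℝ := fun r => r ^ (n + 1) * (P r ^ 2 / 2 + Gn a b (Q r))
    + (n - 1) / 2 * (r ^ n * (Q r * P r)) with hf
  have hfc : Continuous f := by fun_prop
  have hder : ∀ z, 0 < z → HasDerivAt f
      (z ^ n * ((n + 1) * Gn a b (Q z) - (n - 1) / 2 * (Q z * Fnl a b (Q z)))) z := by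
    intro z hz
    refine (((hasDerivAt_pow' (n + 1) hz).mul ((((h.dP z hz).pow 2).div_const 2).add (h.dG z))).add
      (((hasDerivAt_pow' n hz).mul ((h.dQ z).mul (h.dP z hz))).const_mul ((n - 1) / 2 : ℝ))).congr_deriv ?_
    simp only [Pi.mul_apply, Pi.add_apply, Pi.pow_apply]
    push_cast
    field_simp
    ring
  have hf0 : f 0 = 0 := by
    simp only [hf]
    rw [zero_pow (by omega), zero_pow (by omega)]; ring
  have hlim : Tendsto f atTop (𝓝 0) := by
    have h1 := ((h.dec_P (n + 1)).mul h.limP).div_const 2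
    have h2 := h.dec_G (n + 1)
    have h3 := ((h.dec_P n).mul h.limQ).const_mul ((n - 1) / 2 : ℝ)
    have := (h1.add h2).add h3
    simp only [mul_zero, zero_div, add_zero] at this
    refine this.congr fun r => ?_
    simp only [hf]; ring
  show 0 < f r
  by_cases hH : 0 ≤ (n + 1) * Gn a b (Q r) - (n - 1) / 2 * (Q r * Fnl a b (Q r))
  · rw [← hf0]
    refine mv_lt hr hfc.continuousOn (fun z hz => hder z hz.1) fun z hz => ?_
    exact mul_pos (pow_pos hz.1 n) (H_sign hn hb hab (h.pos r hr.le)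
      (h.anti hz.1.le hr.le hz.2) (h.lt_half hz.1.le) hH)
  · push Not at hH
    have hneg : ∀ z, r ≤ z → (n + 1) * Gn a b (Q z) - (n - 1) / 2 * (Q z * Fnl a b (Q z)) < 0 := by
      intro z hz
      rcases hz.eq_or_lt with rfl | hz
      · exact hH
      by_contra hc
      push Not at hc
      have := H_sign hn hb hab (h.pos z (hr.trans hz).le)
        (h.anti hr.le (hr.trans hz).le hz) (h.lt_half hr.le) hc
      linarith
    have hanti : ∀ x y, r ≤ x → x ≤ y → f y ≤ f x := by
      intro x y hx hxy
      refine mv_ge hxy hfc.continuousOn (fun z hz => hder z (by linarith [hz.1])) fun z hz => ?_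
      exact mul_nonpos_of_nonneg_of_nonpos (pow_nonneg (by linarith [hz.1]) n)
        (hneg z (by linarith [hz.1])).le
    have h1 : f (r + 1) < f r := by
      refine mv_gt (by linarith) hfc.continuousOn (fun z hz => hder z (by linarith [hz.1]))
        fun z hz => ?_
      exact mul_neg_of_pos_of_neg (pow_pos (by linarith [hz.1]) n) (hneg z hz.1.le)
    have h2 := ge_of_anti_tendsto hanti hlim (show r ≤ r + 1 by linarith)
    linarith

lemma Z_pos (h : GS n a b Q P) (hn : 1 ≤ n) {r : ℝ} (hr : 0 < r) :
    0 < r ^ n * ((n - 1) * (Q r * P r) + r * (Fnl a b (Q r) * Q r) + r * P r ^ 2) := by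
  have hb := h.hb
  have hab := h.hab
  have := h.cP
  have := h.cQ
  have := h.cF
  by_contra hc
  have hp := h.poh_pos hn hr
  have hM : 0 < 2 * Gn a b (Q r) - Q r * Fnl a b (Q r) := by
    have : 0 < r ^ (n + 1) * (2 * Gn a b (Q r) - Q r * Fnl a b (Q r)) := by
      push Not at hc
      rw [pow_succ] at *
      nlinarith
    exact (pos_iff_pos_of_mul_pos this).1 (by positivity)
  apply hc
  have hm := mv_lt (f := fun r => r ^ n * ((n - 1) * (Q r * P r) + r * (Fnl a b (Q r) * Q r) + r * P r ^ 2))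
    (f' := fun r => r ^ n * (2 * (Fnl a b (Q r) * Q r) + r * P r * (Q r * Fd a b (Q r) - Fnl a b (Q r))))
    hr (by fun_prop) ?_ ?_
  · simp only [zero_mul, h.P0] at hm
    simpa using hm
  · intro z hz
    refine ((hasDerivAt_pow' n hz.1).mul (((((h.dQ z).mul (h.dP z hz.1)).const_mul (n - 1 : ℝ)).add
      ((hasDerivAt_id z).mul ((h.dF z).mul (h.dQ z)))).add
      ((hasDerivAt_id z).mul ((h.dP z hz.1).pow 2)))).congr_deriv ?_
    have := hz.1
    simp only [Pi.mul_apply, Pi.add_apply, Pi.pow_apply, id]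
    push_cast
    field_simp
    ring
  · intro z hz
    have I := M_sign hb hab (h.pos r hr.le) (h.anti hz.1.le hr.le hz.2).le (h.lt_half hz.1.le) hM
    have F := F_pos_of_I1 hb hab (h.pos z hz.1.le) (h.lt_half hz.1.le) I.le
    have A := mul_pos F (h.pos z hz.1.le)
    have B := mul_pos_of_neg_of_neg (mul_neg_of_pos_of_neg hz.1 (h.P_neg hz.1)) I
    exact mul_pos (pow_pos hz.1 n) (by linarith)

lemma theta (h : GS n a b Q P) (hn : 1 ≤ n) {s r : ℝ} (hs : 0 < s) (hsr : s < r) :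
    r * P r / Q r < s * P s / Q s := by
  have hder : ∀ z, 0 < z → HasDerivAt (fun z => z * P z / Q z)
      (-((n - 1) * (Q z * P z) + z * (Fnl a b (Q z) * Q z) + z * P z ^ 2) / Q z ^ 2) z := by
    intro z hz
    have hq := (h.pos z hz.le).ne'
    refine (((hasDerivAt_id z).mul (h.dP z hz)).div (h.dQ z) hq).congr_deriv ?_
    simp only [Pi.mul_apply, id]
    field_simp
    ring
  refine mv_gt (f := fun z => z * P z / Q z) hsr
    (fun z hz => (hder z (by linarith [hz.1])).continuousAt.continuousWithinAt)
    (fun z hz => hder z (by linarith [hz.1])) fun z hz => ?_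
  have hz0 : 0 < z := by linarith [hz.1]
  have := (pos_iff_pos_of_mul_pos (h.Z_pos hn hz0)).1 (pow_pos hz0 n)
  exact div_neg_of_neg_of_pos (by linarith) (pow_pos (h.pos z hz0.le) 2)

end GS

/-! ### Linear ODE facts -/

lemma growth {n : ℕ} {k R : ℝ} {y u m : ℝ → ℝ} (hk : 0 < k) (hR : 0 < R)
    (hm : ∀ r, R ≤ r → k ≤ m r) (dy : ∀ r, R ≤ r → HasDerivAt y (u r) r)
    (du : ∀ r, R ≤ r → HasDerivAt u (-(n / r) * u r + m r * y r) r)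
    (y0 : 0 < y R) (u0 : 0 < u R) :
    ∃ c > (0:ℝ), ∃ ε > (0:ℝ), ∀ r, R ≤ r → c * Real.exp (ε * r) ≤ y r ∧ c * Real.exp (ε * r) ≤ u r := by
  have cy : ∀ x, R ≤ x → ContinuousOn y (Icc R x) := fun x hx z hz =>
    (dy z hz.1).continuousAt.continuousWithinAt
  have cu : ∀ x, R ≤ x → ContinuousOn u (Icc R x) := fun x hx z hz =>
    (du z hz.1).continuousAt.continuousWithinAt
  have hprod : ∀ x, R ≤ x → 0 < y x * u x := by
    intro x hx
    have h1 := mv_le (f := fun r => r ^ n * (y r * u r))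
      (f' := fun r => r ^ n * (u r ^ 2 + m r * y r ^ 2)) hx
      (ContinuousOn.mul (by fun_prop) ((cy x hx).mul (cu x hx))) (fun z hz => by
        have hz0 : 0 < z := by linarith [hz.1]
        refine ((hasDerivAt_pow' n hz0).mul ((dy z hz.1.le).mul (du z hz.1.le))).congr_deriv ?_
        simp only [Pi.mul_apply]
        field_simp
        ring) (fun z hz => by
        have hz0 : 0 < z := by linarith [hz.1]
        have : 0 ≤ m z := hk.le.trans (hm z hz.1.le)
        positivity)
    have h2 : 0 < R ^ n * (y R * u R) := by positivity
    exact (pos_iff_pos_of_mul_pos (h2.trans_le h1)).1 (pow_pos (hR.trans_le hx) n)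
  have hy : ∀ x, R ≤ x → 0 < y x := by
    intro x hx
    by_contra hc
    push Not at hc
    obtain ⟨z, hz, hz2⟩ := intermediate_value_Icc' hx (cy x hx) ⟨hc, y0.le⟩
    have := hprod z hz.1
    rw [hz2] at this
    simp at this
  have hu : ∀ x, R ≤ x → 0 < u x := fun x hx => (pos_iff_pos_of_mul_pos (hprod x hx)).1 (hy x hx)
  set K : ℝ := n / R with hK
  have hK0 : 0 ≤ K := by positivity
  obtain ⟨ε, hε, he1, he2, he3⟩ : ∃ ε : ℝ, 0 < ε ∧ ε ≤ 1 ∧ ε * y R ≤ u R ∧ ε * (K + 1) ≤ k := by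
    refine ⟨min 1 (min (u R / y R) (k / (K + 1))), by positivity, min_le_left _ _, ?_, ?_⟩
    · rw [← le_div_iff₀ y0]
      exact (min_le_right _ _).trans (min_le_left _ _)
    · rw [← le_div_iff₀ (by positivity)]
      exact (min_le_right _ _).trans (min_le_right _ _)
  have hzz : ∀ x, R ≤ x → 0 ≤ u x - ε * y x := by
    intro x hx
    have h1 := mv_le (f := fun r => (u r - ε * y r) * Real.exp ((K + ε) * r))
      (f' := fun r => ((-(n / r) * u r + m r * y r - ε * u r) + (K + ε) * (u r - ε * y r))
        * Real.exp ((K + ε) * r)) hx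
      (((cu x hx).sub ((cy x hx).const_mul ε)).mul (by fun_prop)) (fun z hz => by
        refine (((du z hz.1.le).sub ((dy z hz.1.le).const_mul ε)).mul
          ((hasDerivAt_id z).const_mul (K + ε)).exp).congr_deriv ?_
        simp only [Pi.sub_apply, id]
        ring) (fun z hz => by
        have hz0 : 0 < z := by linarith [hz.1]
        refine mul_nonneg ?_ (Real.exp_pos _).le
        have e1 : (n / z : ℝ) ≤ K := by
          rw [hK]; exact div_le_div_of_nonneg_left (by positivity) hR hz.1.le
        have e2 := mul_le_mul_of_nonneg_right e1 (hu z hz.1.le).le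
        have e3 := mul_le_mul_of_nonneg_right (hm z hz.1.le) (hy z hz.1.le).le
        have e4 : ε * (K + ε) ≤ k := le_trans (by gcongr) he3
        have e5 := mul_le_mul_of_nonneg_right e4 (hy z hz.1.le).le
        linarith)
    have h2 : 0 ≤ (u R - ε * y R) * Real.exp ((K + ε) * R) :=
      mul_nonneg (by linarith) (Real.exp_pos _).le
    exact nonneg_of_mul_nonneg_left (h2.trans h1) (Real.exp_pos _)
  have hye : ∀ x, R ≤ x → y R * Real.exp (-(ε * R)) * Real.exp (ε * x) ≤ y x := by
    intro x hx
    have h1 := mv_le (f := fun r => y r * Real.exp (-(ε * r)))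
      (f' := fun r => (u r - ε * y r) * Real.exp (-(ε * r))) hx
      ((cy x hx).mul (by fun_prop)) (fun z hz => by
        refine ((dy z hz.1.le).mul ((hasDerivAt_id z).const_mul ε).neg.exp).congr_deriv ?_
        simp only [Pi.neg_apply, id]
        ring) (fun z hz => mul_nonneg (hzz z hz.1.le) (Real.exp_pos _).le)

    rw [Real.exp_neg (ε * x), ← div_eq_mul_inv, le_div_iff₀ (Real.exp_pos _)] at h1
    exact h1
  have hc0 : 0 < y R * Real.exp (-(ε * R)) := by positivity
  refine ⟨ε * (y R * Real.exp (-(ε * R))), by positivity, ε, hε, fun r hr => ?_⟩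
  have h1 := hye r hr
  have h2 := hzz r hr
  have h3 : 0 < y R * Real.exp (-(ε * R)) * Real.exp (ε * r) := by positivity
  constructor
  · nlinarith
  · nlinarith

structure LS (n : ℕ) (a b : ℝ) (Q v u : ℝ → ℝ) : Prop where
  dv : ∀ r, HasDerivAt v (u r) r
  cu : Continuous u
  du : ∀ r, 0 < r → HasDerivAt u (-(n / r) * u r - Fd a b (Q r) * v r) r
  v0 : v 0 = 1
  u0 : u 0 = 0

lemma mul_bdd {f g : ℝ → ℝ} {C : ℝ} (hf : Tendsto f atTop (𝓝 0)) (hg : ∀ᶠ r in atTop, |g r| ≤ C) :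
    Tendsto (fun r => f r * g r) atTop (𝓝 0) := by
  have h1 : Tendsto (fun r => |f r| * C) atTop (𝓝 0) := by
    simpa using hf.abs.mul_const C
  refine squeeze_zero_norm' ?_ h1
  filter_upwards [hg] with r hr
  rw [Real.norm_eq_abs, abs_mul]
  gcongr

lemma first_zero {f : ℝ → ℝ} (hf : Continuous f) {x y : ℝ} (hxy : x ≤ y) (hx : f x < 0)
    (hy : 0 ≤ f y) : ∃ z, x < z ∧ z ≤ y ∧ f z = 0 ∧ ∀ t, x ≤ t → t < z → f t < 0 := by
  have hcomp : IsCompact (Icc x y ∩ {t | 0 ≤ f t}) :=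
    isCompact_Icc.inter_right (isClosed_le continuous_const hf)
  obtain ⟨z, hz, hz2⟩ := hcomp.exists_isLeast ⟨y, ⟨hxy, le_rfl⟩, hy⟩
  obtain ⟨t, ht, ht2⟩ := intermediate_value_Icc hz.1.1 hf.continuousOn ⟨hx.le, hz.2⟩
  have htz : z ≤ t := hz2 ⟨⟨ht.1, ht.2.trans hz.1.2⟩, by simp [ht2]⟩
  have : t = z := le_antisymm ht.2 htz
  subst this
  refine ⟨t, lt_of_le_of_ne ht.1 ?_, hz.1.2, ht2, ?_⟩
  · rintro rfl; linarith
  · intro s hs hst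
    by_contra hc
    push Not at hc
    have := hz2 ⟨⟨hs, hst.le.trans hz.1.2⟩, hc⟩
    linarith

lemma neg_right {f : ℝ → ℝ} {f' c r : ℝ} (hf : HasDerivAt f f' c) (h0 : f c = 0) (h' : f' < 0)
    (hr : c < r) : ∃ s, c < s ∧ s < r ∧ ∀ t, c < t → t ≤ s → f t < 0 := by
  have h1 := (hasDerivAt_iff_tendsto_slope.1 hf).eventually (gt_mem_nhds h')
  have h2 : ∀ᶠ y in 𝓝[>] c, slope f c y < 0 := h1.filter_mono (nhdsWithin_mono _ (fun y hy => ne_of_gt hy))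
  obtain ⟨w, hw, hw2⟩ := mem_nhdsGT_iff_exists_Ioo_subset.1 h2
  have hw : c < w := hw
  have hmin : c < min w r := lt_min hw hr
  refine ⟨(c + min w r) / 2, by linarith, by linarith [min_le_right w r], fun t ht ht2 => ?_⟩
  have h3 : slope f c t < 0 := hw2 ⟨ht, by linarith [min_le_left w r]⟩
  rw [slope_def_field, h0, sub_zero] at h3
  by_contra hc
  push Not at hc
  have := div_nonneg hc (show 0 ≤ t - c by linarith)
  linarith

lemma pos_left {f : ℝ → ℝ} {f' c r : ℝ} (hf : HasDerivAt f f' c) (h0 : f c = 0) (h' : f' < 0)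
    (hr : r < c) : ∃ s, r < s ∧ s < c ∧ 0 < f s := by
  have hg : HasDerivAt (fun x => -f (-x)) (- (f' * (-1))) (-c) := by
    have : HasDerivAt f f' (- -c) := by simpa using hf
    exact (this.comp (-c) (hasDerivAt_neg (-c))).neg
  obtain ⟨s, h1, h2, h3⟩ := neg_right (r := -r) hg (by simp [h0]) (by linarith) (by linarith)
  refine ⟨-s, by linarith, by linarith, ?_⟩
  have := h3 s h1 le_rfl
  linarith

namespace LS

variable {n : ℕ} {a b : ℝ} {Q P v u : ℝ → ℝ}

lemma cv (l : LS n a b Q v u) : Continuous v :=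
  continuous_iff_continuousAt.2 fun r => (l.dv r).continuousAt

/-- if `v v' ≤ 0` far out then `v`, `v'` are bounded. -/
lemma bdd (l : LS n a b Q v u) (hb : 0 < b) {R : ℝ} (hR : 0 < R)
    (hF : ∀ r, R ≤ r → Fd a b (Q r) ≤ -(b / 2)) (h : ∀ r, R ≤ r → v r * u r ≤ 0) :
    (∀ᶠ r in atTop, |v r| ≤ |v R|) ∧ (∀ᶠ r in atTop, |u r| ≤ |u R|) := by
  have := l.cv
  have := l.cu
  constructor
  · filter_upwards [eventually_ge_atTop R] with r hr
    rw [← sq_le_sq]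
    refine mv_ge (f := fun r => v r ^ 2) (f' := fun r => 2 * (v r * u r)) hr (by fun_prop)
      (fun z hz => ((l.dv z).pow 2).congr_deriv (by push_cast; ring)) fun z hz => ?_
    linarith [h z hz.1.le]
  · filter_upwards [eventually_ge_atTop R] with r hr
    rw [← sq_le_sq]
    refine mv_ge (f := fun r => u r ^ 2)
      (f' := fun r => -2 * (n / r * u r ^ 2) + 2 * (-Fd a b (Q r)) * (v r * u r)) hr (by fun_prop)
      (fun z hz => ((l.du z (hR.trans hz.1)).pow 2).congr_deriv (by push_cast; ring)) fun z hz => ?_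
    have hz0 : 0 < z := hR.trans hz.1
    have h1 : 0 ≤ n / z * u z ^ 2 := by positivity
    have h2 := mul_nonpos_of_nonneg_of_nonpos
      (show 0 ≤ 2 * (-Fd a b (Q z)) by linarith [hF z hz.1.le]) (h z hz.1.le)
    linarith

lemma grow_pos (l : LS n a b Q v u) (hb : 0 < b) {R : ℝ} (hR : 0 < R)
    (hF : ∀ r, R ≤ r → Fd a b (Q r) ≤ -(b / 2)) (hv : 0 < v R) (hu : 0 < u R) :
    ∃ c > (0:ℝ), ∃ ε > (0:ℝ), ∀ r, R ≤ r →
      c * Real.exp (ε * r) ≤ v r ∧ c * Real.exp (ε * r) ≤ u r :=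
  growth (n := n) (k := b / 2) (m := fun r => - Fd a b (Q r)) (by linarith) hR
    (fun r hr => by linarith [hF r hr]) (fun r _ => l.dv r)
    (fun r hr => (l.du r (hR.trans_le hr)).congr_deriv (by ring)) hv hu

lemma grow_neg (l : LS n a b Q v u) (hb : 0 < b) {R : ℝ} (hR : 0 < R)
    (hF : ∀ r, R ≤ r → Fd a b (Q r) ≤ -(b / 2)) (hv : v R < 0) (hu : u R < 0) :
    ∃ c > (0:ℝ), ∃ ε > (0:ℝ), ∀ r, R ≤ r →
      c * Real.exp (ε * r) ≤ - v r ∧ c * Real.exp (ε * r) ≤ - u r :=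
  growth (n := n) (k := b / 2) (m := fun r => - Fd a b (Q r)) (y := fun r => - v r)
    (u := fun r => - u r) (by linarith) hR
    (fun r hr => by linarith [hF r hr]) (fun r _ => (l.dv r).neg)
    (fun r hr => (l.du r (hR.trans_le hr)).neg.congr_deriv (by ring)) (by linarith) (by linarith)

/-- dimension one -/
lemma main_one (l : LS 0 a b Q v u) (g : GS 0 a b Q P) :
    ∃ c > (0 : ℝ), ∃ ε > (0 : ℝ), ∀ᶠ r in atTop, c * Real.exp (ε * r) ≤ |v r| := by
  obtain ⟨R, hR, hF⟩ := g.far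
  have hF' := fun r hr => (hF r hr).1
  by_cases hex : ∃ r, R ≤ r ∧ 0 < v r * u r
  · obtain ⟨r, hr, hvu⟩ := hex
    have hr0 : 0 < r := hR.trans_le hr
    rcases mul_pos_iff.1 hvu with ⟨h1, h2⟩ | ⟨h1, h2⟩
    · obtain ⟨c, hc, ε, hε, h⟩ := l.grow_pos g.hb hr0 (fun s hs => hF' s (hr.trans hs)) h1 h2
      refine ⟨c, hc, ε, hε, ?_⟩
      filter_upwards [eventually_ge_atTop r] with s hs
      exact (h s hs).1.trans (le_abs_self _)
    · obtain ⟨c, hc, ε, hε, h⟩ := l.grow_neg g.hb hr0 (fun s hs => hF' s (hr.trans hs)) h1 h2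
      refine ⟨c, hc, ε, hε, ?_⟩
      filter_upwards [eventually_ge_atTop r] with s hs
      exact (h s hs).1.trans (neg_le_abs _)
  · exfalso
    push Not at hex
    obtain ⟨b1, b2⟩ := l.bdd g.hb hR hF' hex
    have t1 := mul_bdd (by simpa using g.dec_F 0) b1
    have t2 := mul_bdd g.limP b2
    have t3 := t1.add t2
    rw [add_zero] at t3
    have := l.cv
    have := l.cu
    have := g.cP
    have := g.cF
    have hd : ∀ z, 0 < z → HasDerivAt (fun r => Fnl a b (Q r) * v r + P r * u r) 0 z := by
      intro z hz
      refine (((g.dF z).mul (l.dv z)).add ((g.dP z hz).mul (l.du z hz))).congr_deriv ?_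
      push_cast
      ring
    have hm : ∀ r, 0 ≤ r → Fnl a b (Q 0) ≤ Fnl a b (Q r) * v r + P r * u r := by
      intro r hr
      have := mv_le (f := fun r => Fnl a b (Q r) * v r + P r * u r) (f' := fun _ => 0) hr
        (by fun_prop) (fun z hz => hd z hz.1) (fun z hz => le_rfl)
      simpa [l.v0, l.u0] using this
    have := ge_of_tendsto t3 (by filter_upwards [eventually_ge_atTop 0] with r hr using hm r hr)
    linarith [g.F0_pos]

/-- the Wronskian of `v` with `-Q'` -/
lemma hasDerivAt_W1 {m : ℕ} (l : LS (m + 1) a b Q v u) (g : GS (m + 1) a b Q P) {z : ℝ} (hz : 0 < z) :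
    HasDerivAt (fun r => (m + 1) * (r ^ m * (P r * v r)) + r ^ (m + 1) * (Fnl a b (Q r) * v r + P r * u r))
      (-((m + 1) * z ^ m / z * P z * v z)) z := by
  refine ((((hasDerivAt_pow' m hz).mul ((g.dP z hz).mul (l.dv z))).const_mul (m + 1 : ℝ)).add
    ((hasDerivAt_pow' (m + 1) hz).mul
      (((g.dF z).mul (l.dv z)).add ((g.dP z hz).mul (l.du z hz))))).congr_deriv ?_
  simp only [Pi.mul_apply, Pi.add_apply]
  push_cast
  field_simp
  ring

lemma W1_lt {m : ℕ} (l : LS (m + 1) a b Q v u) (g : GS (m + 1) a b Q P) {x y : ℝ} (hx : 0 ≤ x)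
    (hxy : x < y) (hv : ∀ t, x < t → t < y → 0 < v t) :
    (m + 1) * (x ^ m * (P x * v x)) + x ^ (m + 1) * (Fnl a b (Q x) * v x + P x * u x) <
    (m + 1) * (y ^ m * (P y * v y)) + y ^ (m + 1) * (Fnl a b (Q y) * v y + P y * u y) := by
  have := l.cv
  have := l.cu
  have := g.cP
  have := g.cF
  refine mv_lt (f := fun r => (m + 1) * (r ^ m * (P r * v r))
    + r ^ (m + 1) * (Fnl a b (Q r) * v r + P r * u r)) hxy (by fun_prop)
    (fun z hz => l.hasDerivAt_W1 g (hx.trans_lt hz.1)) fun z hz => ?_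
  have hz0 := hx.trans_lt hz.1
  have h1 : 0 < (m + 1) * z ^ m / z := by positivity
  have h2 := mul_neg_of_neg_of_pos (mul_neg_of_pos_of_neg h1 (g.P_neg hz0)) (hv z hz.1 hz.2)
  linarith

lemma W1_pos {m : ℕ} (l : LS (m + 1) a b Q v u) (g : GS (m + 1) a b Q P) {y : ℝ}
    (hy : 0 < y) (hv : ∀ t, 0 < t → t < y → 0 < v t) :
    0 < (m + 1) * (y ^ m * (P y * v y)) + y ^ (m + 1) * (Fnl a b (Q y) * v y + P y * u y) := by
  have := l.W1_lt g le_rfl hy hv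
  simpa [g.P0] using this

lemma has_zero {m : ℕ} (l : LS (m + 1) a b Q v u) (g : GS (m + 1) a b Q P) :
    ∃ r, 0 < r ∧ v r ≤ 0 := by
  by_contra hc
  push Not at hc
  obtain ⟨R, hR, hF⟩ := g.far
  have hF' := fun r hr => (hF r hr).1
  by_cases hex : ∃ r, R ≤ r ∧ 0 < v r * u r
  · obtain ⟨r, hr, hvu⟩ := hex
    have hr0 : 0 < r := hR.trans_le hr
    have hv := hc r hr0
    have hu := (pos_iff_pos_of_mul_pos hvu).1 hv
    obtain ⟨c, hc0, ε, hε, h⟩ := l.grow_pos g.hb hr0 (fun s hs => hF' s (hr.trans hs)) hv hu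
    have hbd : ∀ᶠ r in atTop, |(v r)⁻¹| ≤ c⁻¹ := by
      filter_upwards [eventually_ge_atTop r] with s hs
      have h1 := (h s hs).1
      have hs0 : 0 < s := hr0.trans_le hs
      have h2 : 1 ≤ Real.exp (ε * s) := Real.one_le_exp (by positivity)
      rw [abs_of_pos (inv_pos.2 (hc s hs0))]
      exact inv_anti₀ hc0 (by nlinarith)
    have hl := mul_bdd g.limP hbd
    have hmono : ∀ s, 1 ≤ s → P s * (v s)⁻¹ ≤ P 1 * (v 1)⁻¹ := by
      intro s hs
      have hder : ∀ z, 0 < z → HasDerivAt (fun s => P s * (v s)⁻¹)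
        (-((m + 1) * (z ^ m * (P z * v z)) + z ^ (m + 1) * (Fnl a b (Q z) * v z + P z * u z))
          / (z ^ (m + 1) * v z ^ 2)) z := by
        intro z hz
        have hvz := (hc z hz).ne'
        refine ((g.dP z hz).mul ((l.dv z).inv hvz)).congr_deriv ?_
        simp only [Pi.inv_apply]
        push_cast
        field_simp
        ring
      refine mv_ge (f := fun s => P s * (v s)⁻¹) hs
        (fun z hz => (hder z (by linarith [hz.1])).continuousAt.continuousWithinAt)
        (fun z hz => hder z (by linarith [hz.1])) fun z hz => ?_
      have hz0 : 0 < z := by linarith [hz.1]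
      have hvz := hc z hz0
      have := l.W1_pos g hz0 (fun t ht _ => hc t ht)
      exact div_nonpos_of_nonpos_of_nonneg (by linarith) (by positivity)
    have := le_of_tendsto hl (by filter_upwards [eventually_ge_atTop 1] with s hs using hmono s hs)
    have h2 := mul_neg_of_neg_of_pos (g.P_neg one_pos) (inv_pos.2 (hc 1 one_pos))
    linarith
  · push Not at hex
    obtain ⟨b1, b2⟩ := l.bdd g.hb hR hF' hex
    have t1 := (mul_bdd (g.dec_P m) b1).const_mul (m + 1 : ℝ)
    have t2 := mul_bdd (g.dec_F (m + 1)) b1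
    have t3 := mul_bdd (g.dec_P (m + 1)) b2
    have t := (t1.add t2).add t3
    simp only [mul_zero, add_zero] at t
    have h1 := l.W1_pos g one_pos (fun t ht _ => hc t ht)
    have h2 := ge_of_tendsto t (b := (m + 1) * ((1:ℝ) ^ m * (P 1 * v 1))
        + (1:ℝ) ^ (m + 1) * (Fnl a b (Q 1) * v 1 + P 1 * u 1)) (by
      filter_upwards [eventually_gt_atTop 1] with s hs
      have := (l.W1_lt g zero_le_one hs (fun t ht _ => hc t (by linarith))).le
      refine this.trans (le_of_eq ?_)
      ring)
    linarith

/-- the Wronskian with `r Q' + c Q` -/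
lemma hasDerivAt_W2 (l : LS n a b Q v u) (g : GS n a b Q P) (c : ℝ) {z : ℝ} (hz : 0 < z) :
    HasDerivAt (fun r => r ^ n * (((1 - n + c) * P r - r * Fnl a b (Q r)) * v r
        - (r * P r + c * Q r) * u r))
      (z ^ n * (v z * (c * (Q z * Fd a b (Q z)) - (c + 2) * Fnl a b (Q z)))) z := by
  refine ((hasDerivAt_pow' n hz).mul (((((g.dP z hz).const_mul (1 - n + c : ℝ)).sub
    ((hasDerivAt_id z).mul (g.dF z))).mul (l.dv z)).sub
    ((((hasDerivAt_id z).mul (g.dP z hz)).add ((g.dQ z).const_mul c)).mul (l.du z hz)))).congr_deriv ?_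
  simp only [Pi.mul_apply, Pi.add_apply, Pi.sub_apply, id]
  field_simp
  ring

lemma main_two {m : ℕ} (l : LS (m + 1) a b Q v u) (g : GS (m + 1) a b Q P) :
    ∃ c > (0 : ℝ), ∃ ε > (0 : ℝ), ∀ᶠ r in atTop,
      v r ≤ -c * Real.exp (ε * r) ∧ u r ≤ -c * Real.exp (ε * r) := by
  have cv := l.cv
  have cu := l.cu
  have cP := g.cP
  have cQ := g.cQ
  have cF := g.cF
  obtain ⟨q, hq0, hq⟩ := l.has_zero g
  obtain ⟨r1, hr1, -, hv1, hvpos⟩ := first_zero (f := fun r => - v r) (by fun_prop) hq0.le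
    (by simp [l.v0]) (by simpa using hq)
  have hv1 : v r1 = 0 := by simpa using hv1
  have hvpos : ∀ t, 0 ≤ t → t < r1 → 0 < v t := fun t h1 h2 => by
    have := hvpos t h1 h2; simpa using this
  have hu1 : u r1 < 0 := by
    have h1 := l.W1_pos g hr1 (fun t h1 h2 => hvpos t h1.le h2)
    rw [hv1] at h1
    simp only [mul_zero, zero_add] at h1
    have h2 := (pos_iff_pos_of_mul_pos h1).1 (by positivity)
    exact (neg_iff_neg_of_mul_pos h2).1 (g.P_neg hr1)
  set c : ℝ := -(r1 * P r1 / Q r1) with hc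
  have hQ1 := g.pos r1 hr1.le
  have hc0 : 0 < c := by
    rw [hc]
    have := div_neg_of_neg_of_pos (mul_neg_of_pos_of_neg hr1 (g.P_neg hr1)) hQ1
    linarith
  have hw1 : r1 * P r1 + c * Q r1 = 0 := by rw [hc]; field_simp; ring
  have hw : ∀ r, r1 < r → r * P r + c * Q r < 0 := by
    intro r hr
    have h1 := g.theta (by omega) hr1 hr
    have hQr := g.pos r (hr1.trans hr).le
    rw [div_lt_iff₀ hQr] at h1
    rw [hc]; linarith
  set W : ℝ → ℝ := fun r => r ^ (m + 1) * (((1 - ((m + 1 : ℕ) : ℝ) + c) * P r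
    - r * Fnl a b (Q r)) * v r - (r * P r + c * Q r) * u r) with hW
  have hWc : Continuous W := by fun_prop
  have hWd := fun z (hz : 0 < z) => l.hasDerivAt_W2 g c hz
  have hW0 : W 0 = 0 := by simp [hW]
  have hW1 : W r1 = 0 := by simp [hW, hw1, hv1]
  have hJ : ∀ r, r1 < r → 0 < c * (Q r * Fd a b (Q r)) - (c + 2) * Fnl a b (Q r) := by
    intro r hr
    by_contra hn
    push Not at hn
    have : W r1 < W 0 := by
      refine mv_gt hr1 hWc.continuousOn (fun z hz => hWd z hz.1) fun z hz => ?_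
      have hzr : z < r := hz.2.trans hr
      have := J_sign g.hb g.hab (Or.inl ⟨hc0.le, by linarith⟩) (g.pos r (hr1.trans hr).le)
        (g.anti hz.1.le (hr1.trans hr).le hzr) (g.lt_half hz.1.le) hn
      exact mul_neg_of_pos_of_neg (pow_pos hz.1 _)
        (mul_neg_of_pos_of_neg (hvpos z hz.1.le hz.2) this)
    linarith
  have hWlt : ∀ x y, r1 ≤ x → x < y → (∀ t, x < t → t < y → v t < 0) → W y < W x := by
    intro x y hx hxy hv
    refine mv_gt hxy hWc.continuousOn (fun z hz => hWd z (by linarith [hz.1])) fun z hz => ?_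
    exact mul_neg_of_pos_of_neg (pow_pos (by linarith [hz.1]) _)
      (mul_neg_of_neg_of_pos (hv z hz.1 hz.2) (hJ z (by linarith [hz.1])))
  have hvneg : ∀ r, r1 < r → v r < 0 := by
    intro r hr
    by_contra hn
    push Not at hn
    obtain ⟨s, hs1, hs2, hs3⟩ := neg_right (l.dv r1) hv1 hu1 hr
    obtain ⟨r2, h1, h2, h3, h4⟩ := first_zero cv hs2.le (hs3 s hs1 le_rfl) hn
    have h5 : W r2 < W r1 := hWlt r1 r2 le_rfl (by linarith) (fun t ht1 ht2 => by
      rcases le_total t s with h | h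
      · exact hs3 t ht1 h
      · exact h4 t h ht2)
    rw [hW1] at h5
    simp only [hW, h3, mul_zero, zero_sub] at h5
    have h6 : u r2 < 0 := by
      by_contra hu
      push Not at hu
      have h7 := mul_nonpos_of_nonpos_of_nonneg (hw r2 (by linarith)).le hu
      have h8 : 0 ≤ r2 ^ (m + 1) * -((r2 * P r2 + c * Q r2) * u r2) :=
        mul_nonneg (pow_nonneg (by linarith) _) (by linarith)
      linarith
    obtain ⟨t, ht1, ht2, ht3⟩ := pos_left (l.dv r2) h3 h6 h1
    linarith [h4 t ht1.le ht2]
  obtain ⟨R, hR, hF⟩ := g.far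
  have hF' := fun r hr => (hF r hr).1
  set R' := max R (r1 + 1) with hR'
  have hRR : R ≤ R' := le_max_left _ _
  have hR1 : r1 + 1 ≤ R' := le_max_right _ _
  by_cases hex : ∃ r, R' ≤ r ∧ 0 < v r * u r
  · obtain ⟨r, hr, hvu⟩ := hex
    have hv := hvneg r (by linarith)
    have hu := (neg_iff_neg_of_mul_pos hvu).1 hv
    obtain ⟨c', hc', ε, hε, h⟩ := l.grow_neg g.hb (show 0 < r by linarith)
      (fun s hs => hF' s (by linarith)) hv hu
    refine ⟨c', hc', ε, hε, ?_⟩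
    filter_upwards [eventually_ge_atTop r] with s hs
    have := h s hs
    constructor <;> linarith
  · exfalso
    push Not at hex
    obtain ⟨b1, b2⟩ := l.bdd g.hb (show 0 < R' by linarith) (fun s hs => hF' s (by linarith)) hex
    have t1 := (mul_bdd (g.dec_P (m + 1)) b1).const_mul (1 - ((m + 1 : ℕ) : ℝ) + c)
    have t2 := mul_bdd (g.dec_F (m + 2)) b1
    have t3 := mul_bdd (g.dec_P (m + 2)) b2
    have t4 := (mul_bdd (g.dec_Q (m + 1)) b2).const_mul c
    have t := ((t1.sub t2).sub t3).sub t4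
    simp only [mul_zero, sub_zero] at t
    have h1 : W (r1 + 1) < W r1 := hWlt _ _ le_rfl (by linarith) (fun t ht _ => hvneg t ht)
    have h2 := le_of_tendsto t (b := W (r1 + 1)) (by
      filter_upwards [eventually_gt_atTop (r1 + 1)] with s hs
      have := (hWlt (r1 + 1) s (by linarith) hs (fun t ht _ => hvneg t (by linarith))).le
      refine le_trans (le_of_eq ?_) this
      simp only [hW]
      ring)
    linarith

end LS

theorem nondegeneracy_of_ground_state (d : ℕ) (hd : 1 ≤ d) (a b : ℝ)
    (hb : 0 < b) (hab : 2 * b < a)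
    (Q : ℝ → ℝ) (hQ : IsRadialSol d a b Q)
    (hQpos : ∀ r : ℝ, 0 ≤ r → 0 < Q r)
    (hQdec : StrictAntiOn Q (Set.Ici 0))
    (hQlim : Tendsto Q atTop (nhds 0))
    (hQlim' : Tendsto (deriv Q) atTop (nhds 0))
    (v : ℝ → ℝ) (hv : IsLinearizedSol d a b Q v) :
    (∃ c > (0 : ℝ), ∃ ε > (0 : ℝ), ∀ᶠ r in atTop, c * Real.exp (ε * r) ≤ |v r|) ∧
    (2 ≤ d → ∃ c > (0 : ℝ), ∃ ε > (0 : ℝ), ∀ᶠ r in atTop,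
      v r ≤ -c * Real.exp (ε * r) ∧ deriv v r ≤ -c * Real.exp (ε * r)) := by
  obtain ⟨n, rfl⟩ : ∃ n, d = n + 1 := ⟨d - 1, by omega⟩
  have two : (2 : WithTop ℕ∞) ≠ 0 := by norm_num
  have prep : ∀ f : ℝ → ℝ, ContDiff ℝ 2 f → (∀ r, HasDerivAt f (deriv f r) r) ∧
      Continuous (deriv f) ∧ ∀ r, HasDerivAt (deriv f) (deriv (deriv f) r) r := by
    intro f hf
    have h1 : ContDiff ℝ 1 (deriv f) := (contDiff_succ_iff_deriv.1
      (show ContDiff ℝ (1 + 1) f by norm_num; exact hf)).2.2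
    exact ⟨fun r => (hf.differentiable two r).hasDerivAt, h1.continuous,
      fun r => (h1.differentiable one_ne_zero r).hasDerivAt⟩
  obtain ⟨q1, q2, q3⟩ := prep Q hQ.1
  obtain ⟨v1, v2, v3⟩ := prep v hv.1
  have g : GS n a b Q (deriv Q) :=
    { hb := hb, hab := hab, dQ := q1, cP := q2, P0 := hQ.2.1, pos := hQpos, anti := hQdec,
      limQ := hQlim, limP := hQlim'
      dP := fun r hr => (q3 r).congr_deriv (by
        have := hQ.2.2 r hr
        push_cast at this
        rw [add_sub_cancel_right] at this
        linarith) }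
  have l : LS n a b Q v (deriv v) :=
    { dv := v1, cu := v2, v0 := hv.2.1, u0 := hv.2.2.1
      du := fun r hr => (v3 r).congr_deriv (by
        have := hv.2.2.2 r hr
        push_cast at this
        rw [add_sub_cancel_right, deriv_Fnl] at this
        linarith) }
  rcases n with _ | m
  · exact ⟨l.main_one g, fun h => by omega⟩
  · have h := l.main_two g
    refine ⟨?_, fun _ => h⟩
    obtain ⟨c, hc, ε, hε, h⟩ := h
    refine ⟨c, hc, ε, hε, ?_⟩
    filter_upwards [h] with r hr
    have := neg_le_abs (v r)
    linarith [hr.1]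
end
end

section
/- Let d ≥ 2 and a > 2b > 0. Assume y ∈ S₀ and that the solution v_y of the linearized equation satisfies v_y(r) → −∞ and v_y'(r) → −∞ as r → ∞. Then there exists ε > 0 such that (y − ε, y) ⊂ S₊ and (y, y + ε) ⊂ S₋. -/
open Real Filter

noncomputable section

/-- `u` is the family of solutions of the radial ODE with `u y 0 = y`, `(u y)'(0) = 0`. -/
def IsShootingFamily (d : ℕ) (a b : ℝ) (u : ℝ → ℝ → ℝ) : Prop :=
  ∀ y ∈ Set.Ioo (0 : ℝ) (Real.pi / 2), IsRadialSol d a b (u y) ∧ u y 0 = y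

/-- `S₊`: initial data whose solution stays bounded away from zero. -/
def Splus (u : ℝ → ℝ → ℝ) : Set ℝ :=
  {y | y ∈ Set.Ioo (0 : ℝ) (Real.pi / 2) ∧ ∃ ε > (0 : ℝ), ∀ r : ℝ, 0 ≤ r → ε ≤ u y r}

/-- `S₀`: initial data whose solution is positive and tends to zero at infinity. -/
def Szero (u : ℝ → ℝ → ℝ) : Set ℝ :=
  {y | y ∈ Set.Ioo (0 : ℝ) (Real.pi / 2) ∧ (∀ r : ℝ, 0 ≤ r → 0 < u y r) ∧
    Tendsto (u y) atTop (nhds 0)}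

/-- `S₋`: initial data whose solution vanishes at some positive radius. -/
def Sminus (u : ℝ → ℝ → ℝ) : Set ℝ :=
  {y | y ∈ Set.Ioo (0 : ℝ) (Real.pi / 2) ∧ ∃ r > (0 : ℝ), u y r = 0}

lemma aux_F (a b : ℝ) (ha : a ≠ 0) : ∀ x, HasDerivAt (Fnl a b)
    ((a-2*b)/2 * Real.cos (2*x) - a/2 * Real.cos (4*x)) x := by
  intro x
  have hF : Fnl a b = fun x => (a-2*b)/4 * Real.sin (2*x) - a/8 * Real.sin (4*x) := by
    funext t
    unfold Fnl
    have h4 : Real.sin (4*t) = 2 * Real.sin (2*t) * Real.cos (2*t) := by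
      rw [← Real.sin_two_mul]; ring_nf
    have hc : Real.cos (2*t) = 1 - 2 * Real.sin t ^ 2 := by
      rw [Real.cos_two_mul]; nlinarith [Real.sin_sq_add_cos_sq t]
    rw [h4, hc]; field_simp; ring
  rw [hF]
  have h2 : HasDerivAt (fun x : ℝ => 2*x) 2 x := by simpa using (hasDerivAt_id x).const_mul 2
  have h4 : HasDerivAt (fun x : ℝ => 4*x) 4 x := by simpa using (hasDerivAt_id x).const_mul 4
  refine HasDerivAt.congr_deriv ((h2.sin.const_mul ((a-2*b)/4)).sub (h4.sin.const_mul (a/8))) ?_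
  ring

lemma aux_cos (x y : ℝ) : |Real.cos x - Real.cos y| ≤ |x - y| := by
  have := Convex.norm_image_sub_le_of_norm_deriv_le (f := Real.cos) (C := 1) (s := Set.univ)
    (x := y) (y := x) (fun t _ => Real.differentiable_cos t)
    (fun t _ => by simpa using Real.abs_sin_le_one t) convex_univ trivial trivial
  simpa using this

lemma aux_L (a b : ℝ) (ha : a ≠ 0) : ∃ L : ℝ, 0 ≤ L ∧ (∀ x, |deriv (Fnl a b) x| ≤ L) ∧
    (∀ x y, |Fnl a b x - Fnl a b y| ≤ L * |x - y|) ∧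
    (∀ x y, |Fnl a b x - Fnl a b y - deriv (Fnl a b) y * (x-y)| ≤ L * (x-y)^2) := by
  have hd : ∀ x, deriv (Fnl a b) x = (a-2*b)/2 * Real.cos (2*x) - a/2 * Real.cos (4*x) :=
    fun x => (aux_F a b ha x).deriv
  set P := |(a-2*b)/2|
  set Q := |a/2|
  have hP : 0 ≤ P := abs_nonneg _
  have hQ : 0 ≤ Q := abs_nonneg _
  have hb : ∀ x, |deriv (Fnl a b) x| ≤ 2*P+4*Q := by
    intro x
    rw [hd]
    have h1 := abs_sub ((a-2*b)/2 * Real.cos (2*x)) (a/2 * Real.cos (4*x))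
    rw [abs_mul, abs_mul] at h1
    have h2 : P * |Real.cos (2*x)| ≤ P := mul_le_of_le_one_right hP (Real.abs_cos_le_one _)
    have h3 : Q * |Real.cos (4*x)| ≤ Q := mul_le_of_le_one_right hQ (Real.abs_cos_le_one _)
    linarith
  have hlip : ∀ x y, |deriv (Fnl a b) x - deriv (Fnl a b) y| ≤ (2*P+4*Q) * |x-y| := by
    intro x y
    rw [hd x, hd y]
    have h1 := abs_sub ((a-2*b)/2 * (Real.cos (2*x) - Real.cos (2*y)))
      (a/2 * (Real.cos (4*x)- Real.cos (4*y)))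
    rw [abs_mul, abs_mul] at h1
    have h2 := aux_cos (2*x) (2*y)
    have h3 := aux_cos (4*x) (4*y)
    rw [← mul_sub, abs_mul, abs_of_pos (by norm_num : (0:ℝ)<2)] at h2
    rw [← mul_sub, abs_mul, abs_of_pos (by norm_num : (0:ℝ)<4)] at h3
    have h4 := mul_le_mul_of_nonneg_left h2 hP
    have h5 := mul_le_mul_of_nonneg_left h3 hQ
    calc _ = |(a-2*b)/2 * (Real.cos (2*x) - Real.cos (2*y)) -
      (a/2 * (Real.cos (4*x)- Real.cos (4*y)))| := by ring_nf
      _ ≤ _ := h1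
      _ ≤ _ := by linarith
  refine ⟨2*P+4*Q, by positivity, hb, ?_, ?_⟩
  · intro x y
    have := Convex.norm_image_sub_le_of_norm_deriv_le (f := Fnl a b) (C := 2*P+4*Q)
      (s := Set.univ) (x := y) (y := x) (fun t _ => (aux_F a b ha t).differentiableAt)
      (fun t _ => by simpa using hb t) convex_univ trivial trivial
    simpa using this
  · intro x y
    have := Convex.norm_image_sub_le_of_norm_hasDerivWithin_le
      (f := fun t => Fnl a b t - deriv (Fnl a b) y * t)
      (f' := fun t => deriv (Fnl a b) t - deriv (Fnl a b) y) (C := (2*P+4*Q)*|x-y|)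
      (s := Set.uIcc y x) (x := y) (y := x) (fun t _ => by
        have h1 := (aux_F a b ha t).differentiableAt.hasDerivAt
        have h2 := (hasDerivAt_id t).const_mul (deriv (Fnl a b) y)
        simp only [mul_one] at h2
        exact (h1.sub h2).hasDerivWithinAt)
      (fun t ht => by
        refine (hlip t y).trans ?_
        exact mul_le_mul_of_nonneg_left (Set.abs_sub_left_of_mem_uIcc ht) (by positivity))
      (convex_uIcc _ _) Set.left_mem_uIcc Set.right_mem_uIcc
    simp only [Real.norm_eq_abs] at this
    calc _ = |Fnl a b x - deriv (Fnl a b) y * x - (Fnl a b y - deriv (Fnl a b) y * y)| := by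
          ring_nf
      _ ≤ _ := this
      _ = _ := by rw [mul_assoc, abs_mul_abs_self]; ring

lemma aux_delta (a b : ℝ) (hb : 0 < b) (hab : 2 * b < a) : ∃ δ > (0:ℝ), δ ≤ 1 ∧
    AntitoneOn (Fnl a b) (Set.Icc 0 δ) ∧ ∀ x, 0 < x → x ≤ δ → 0 < Real.sin x ∧ 
      Real.sin x ^ 2 < 2*b/a := by
  have ha : 0 < a := by linarith
  have h1 : ∀ᶠ x in nhds (0:ℝ), (a-2*b)/2 * Real.cos (2*x) - a/2 * Real.cos (4*x) < 0 := by
    apply Tendsto.eventually_lt_const (v := (a-2*b)/2 * Real.cos (2*0) - a/2 * Real.cos (4*0))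
    · simp; linarith
    · exact Continuous.tendsto (by fun_prop) _
  have h2 : ∀ᶠ x in nhds (0:ℝ), Real.sin x ^ 2 < 2*b/a := by
    apply Tendsto.eventually_lt_const (v := Real.sin 0 ^ 2)
    · simp; positivity
    · exact Continuous.tendsto (by fun_prop) _
  obtain ⟨e, he, h⟩ := Metric.eventually_nhds_iff.1 (h1.and h2)
  have hmem : ∀ x, 0 ≤ x → x ≤ min (e/2) 1 → dist x 0 < e := by
    intro x h0 h3
    rw [Real.dist_eq, sub_zero, abs_of_nonneg h0]
    have := min_le_left (e/2) 1
    linarith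
  refine ⟨min (e/2) 1, by positivity, min_le_right _ _, ?_, ?_⟩
  · apply antitoneOn_of_deriv_nonpos (convex_Icc _ _)
    · exact fun x _ => (aux_F a b ha.ne' x).continuousAt.continuousWithinAt
    · exact fun x _ => (aux_F a b ha.ne' x).differentiableAt.differentiableWithinAt
    · intro x hx
      rw [interior_Icc] at hx
      rw [(aux_F a b ha.ne' x).deriv]
      exact (h (hmem x hx.1.le hx.2.le)).1.le
  · intro x h0 h3
    refine ⟨Real.sin_pos_of_pos_of_lt_pi h0 ?_, (h (hmem x h0.le h3)).2⟩
    have := min_le_right (e/2) 1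
    linarith [Real.pi_gt_three]

lemma aux_gron (φ φ' : ℝ → ℝ) (K c R : ℝ) (hK : 0 ≤ K) (hc : 0 ≤ c)
    (hφ : ∀ r, HasDerivAt φ (φ' r) r) (h : ∀ r, 0 < r → r < R → φ' r ≤ K * φ r + c) :
    ∀ r, 0 ≤ r → r ≤ R → φ r ≤ (φ 0 + c * r) * Real.exp (K * r) := by
  intro r h0 hr
  have hψ : ∀ r, HasDerivAt (fun r => φ r * Real.exp (-(K*r)) - c * r)
      ((φ' r - K * φ r) * Real.exp (-(K*r)) - c) r := by
    intro r
    have h1 : HasDerivAt (fun r : ℝ => -(K*r)) (-K) r := by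
      exact HasDerivAt.congr_deriv ((hasDerivAt_id r).const_mul K).neg (by simp)
    have h2 : HasDerivAt (fun r : ℝ => c*r) c r := by
      simpa using ((hasDerivAt_id r).const_mul c)
    refine HasDerivAt.congr_deriv (((hφ r).mul h1.exp).sub h2) ?_
    ring
  have hanti : AntitoneOn (fun r => φ r * Real.exp (-(K*r)) - c * r) (Set.Icc 0 R) := by
    apply antitoneOn_of_deriv_nonpos (convex_Icc _ _)
    · exact fun x _ => (hψ x).continuousAt.continuousWithinAt
    · exact fun x _ => (hψ x).differentiableAt.differentiableWithinAt
    · intro x hx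
      rw [interior_Icc] at hx
      rw [(hψ x).deriv]
      have h1 := h x hx.1 hx.2
      have h2 : Real.exp (-(K*x)) ≤ 1 := Real.exp_le_one_iff.2 (by nlinarith [hx.1])
      have h3 := Real.exp_pos (-(K*x))
      nlinarith
  have h1 := hanti (a := 0) (b := r) ⟨le_rfl, h0.trans hr⟩ ⟨h0, hr⟩ h0
  simp only [mul_zero, neg_zero, Real.exp_zero, mul_one, sub_zero] at h1
  have h2 := Real.exp_pos (K*r)
  have h3 : Real.exp (-(K*r)) * Real.exp (K*r) = 1 := by rw [← Real.exp_add]; simp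
  calc φ r = φ r * (Real.exp (-(K*r)) * Real.exp (K*r)) := by rw [h3, mul_one]
    _ = φ r * Real.exp (-(K*r)) * Real.exp (K*r) := by ring
    _ ≤ _ := mul_le_mul_of_nonneg_right (by linarith) h2.le

lemma aux_C2 {z : ℝ → ℝ} (h : ContDiff ℝ 2 z) :
    (∀ r, HasDerivAt z (deriv z r) r) ∧ (∀ r, HasDerivAt (deriv z) (deriv (deriv z) r) r) := by
  have h1 : ContDiff ℝ 1 (deriv z) := by
    have : ContDiff ℝ (1+1) z := by norm_num; exact h
    exact (contDiff_succ_iff_deriv.1 this).2.2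
  exact ⟨fun r => (h.differentiable (by norm_num) r).hasDerivAt,
    fun r => (h1.differentiable (by norm_num) r).hasDerivAt⟩

lemma aux_energy (z z' z'' g : ℝ → ℝ) (k L e R : ℝ) (hk : 0 ≤ k) (hL : 0 ≤ L) (he : 0 ≤ e)
    (hz : ∀ r, HasDerivAt z (z' r) r) (hz' : ∀ r, HasDerivAt z' (z'' r) r)
    (ho : ∀ r, 0 < r → z'' r + k / r * z' r + g r = 0)
    (hg : ∀ r, 0 < r → r < R → |g r| ≤ L * |z r| + e) :
    ∀ r, 0 ≤ r → r ≤ R → z r ^ 2 + z' r ^ 2 ≤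
      (z 0 ^ 2 + z' 0 ^ 2 + e^2 * r) * Real.exp ((2+L) * r) := by
  apply aux_gron (fun r => z r ^ 2 + z' r ^ 2) (fun r => 2 * z r * z' r + 2 * z' r * z'' r)
    (2+L) (e^2) R (by positivity) (by positivity)
  · intro r
    refine HasDerivAt.congr_deriv (((hz r).pow 2).add ((hz' r).pow 2)) ?_
    push_cast; ring
  · intro r h0 hr
    have h1 := ho r h0
    have h2 := hg r h0 hr
    have h3 : z'' r = - (k/r * z' r) - g r := by linarith
    have h4 : 0 ≤ k / r := by positivity
    have h5 : -(z' r * g r) ≤ |z' r| * |g r| := by rw [← abs_mul]; exact neg_le_abs _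
    have h6 : |z' r| * |g r| ≤ |z' r| * (L * |z r| + e) :=
      mul_le_mul_of_nonneg_left h2 (abs_nonneg _)
    have h7 : 2 * (|z' r| * |z r|) ≤ z r ^ 2 + z' r ^ 2 := by
      rw [← sq_abs (z r), ← sq_abs (z' r)]; nlinarith [sq_nonneg (|z' r| - |z r|)]
    have h8 : 2 * (|z' r| * e) ≤ e ^ 2 + z' r ^ 2 := by
      rw [← sq_abs (z' r)]; nlinarith [sq_nonneg (|z' r| - e)]
    have h9 := mul_le_mul_of_nonneg_left h7 hL
    have h10 := mul_nonneg h4 (sq_nonneg (z' r))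
    show 2 * z r * z' r + 2 * z' r * z'' r ≤ (2+L) * (z r ^ 2 + z' r ^ 2) + e^2
    rw [h3]
    nlinarith [sq_nonneg (z r - z' r), sq_nonneg (z r)]

lemma aux_first (f : ℝ → ℝ) (hf : Continuous f) (R T : ℝ) (hRT : R ≤ T) (hR : 0 < f R)
    (hT : f T ≤ 0) : ∃ S, R < S ∧ S ≤ T ∧ f S = 0 ∧ ∀ r, R ≤ r → r < S → 0 < f r := by
  have hcl : IsCompact (Set.Icc R T ∩ f ⁻¹' Set.Iic 0) :=
    isCompact_Icc.inter_right (isClosed_Iic.preimage hf)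
  obtain ⟨S, ⟨⟨h1, h2⟩, h3⟩, hmin⟩ := hcl.exists_isLeast ⟨T, ⟨hRT, le_rfl⟩, hT⟩
  have h3 : f S ≤ 0 := h3
  have hlt : ∀ r, R ≤ r → r < S → 0 < f r := by
    intro r hr hrS
    by_contra hc
    have := hmin (a := r) ⟨⟨hr, hrS.le.trans h2⟩, not_lt.1 hc⟩
    linarith
  have hRS : R < S := lt_of_le_of_ne h1 (by rintro rfl; linarith)
  refine ⟨S, hRS, h2, le_antisymm h3 ?_, hlt⟩
  have hc : Set.Icc R S ⊆ f ⁻¹' Set.Ici 0 := by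
    rw [← closure_Ico hRS.ne]
    exact closure_minimal (fun r hr => (hlt r hr.1 hr.2).le) (isClosed_Ici.preimage hf)
  exact hc ⟨hRS.le, le_rfl⟩

lemma aux_trap (z z' z'' g : ℝ → ℝ) (k R T : ℝ) (hk : 0 ≤ k) (hR : 0 < R)
    (hz : ∀ r, HasDerivAt z (z' r) r) (hz' : ∀ r, HasDerivAt z' (z'' r) r)
    (ho : ∀ r, 0 < r → z'' r + k / r * z' r + g r = 0)
    (hg : ∀ r, R ≤ r → r ≤ T → 0 < z r → g r ≤ 0) (hzR : 0 < z R) (hzR' : 0 < z' R) :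
    ∀ r, R ≤ r → r ≤ T → z R ≤ z r := by
  have hmon : ∀ S, (∀ r, R ≤ r → r < S → 0 < z' r) → MonotoneOn z (Set.Icc R S) := by
    intro S hS
    apply monotoneOn_of_deriv_nonneg (convex_Icc _ _)
    · exact fun x _ => (hz x).continuousAt.continuousWithinAt
    · exact fun x _ => (hz x).differentiableAt.differentiableWithinAt
    · intro x hx
      rw [interior_Icc] at hx
      rw [(hz x).deriv]
      exact (hS x hx.1.le hx.2).le
  have hpos : ∀ r, R ≤ r → r ≤ T → 0 < z' r := by
    intro r hr hrT
    by_contra hc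
    obtain ⟨S, hRS, hSr, hS0, hS⟩ := aux_first z' (continuous_iff_continuousAt.2
      fun x => (hz' x).continuousAt) R r hr hzR' (not_lt.1 hc)
    have hm := hmon S hS
    have hq : ∀ r, HasDerivAt (fun r => z' r * Real.exp (k/R*r))
        ((z'' r + k/R * z' r) * Real.exp (k/R*r)) r := by
      intro r
      have h1 : HasDerivAt (fun r : ℝ => k/R*r) (k/R) r := by
        simpa using ((hasDerivAt_id r).const_mul (k/R))
      refine HasDerivAt.congr_deriv ((hz' r).mul h1.exp) ?_
      ring
    have hqm : MonotoneOn (fun r => z' r * Real.exp (k/R*r)) (Set.Icc R S) := by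
      apply monotoneOn_of_deriv_nonneg (convex_Icc _ _)
      · exact fun x _ => (hq x).continuousAt.continuousWithinAt
      · exact fun x _ => (hq x).differentiableAt.differentiableWithinAt
      · intro x hx
        rw [interior_Icc] at hx
        rw [(hq x).deriv]
        have h1 : z R ≤ z x := hm ⟨le_rfl, hRS.le⟩ ⟨hx.1.le, hx.2.le⟩ hx.1.le
        have h2 := hg x hx.1.le (by linarith [hx.2]) (by linarith)
        have h3 := ho x (hR.trans hx.1)
        have h4 : k / x ≤ k / R := div_le_div_of_nonneg_left hk hR hx.1.le
        have h5 := mul_le_mul_of_nonneg_right h4 (hS x hx.1.le hx.2).le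
        exact mul_nonneg (by linarith) (Real.exp_pos _).le
    have h1 := hqm (a := R) (b := S) ⟨le_rfl, hRS.le⟩ ⟨hRS.le, le_rfl⟩ hRS.le
    simp only [hS0, zero_mul] at h1
    have h2 := mul_pos hzR' (Real.exp_pos (k/R*R))
    linarith
  intro r hr hrT
  exact hmon r (fun x hx hxr => hpos x hx (by linarith)) ⟨le_rfl, hr⟩ ⟨hr, le_rfl⟩ hr

lemma aux_after (d : ℕ) (hd : 2 ≤ d) (a b : ℝ) (hb : 0 < b) (hab : 2 * b < a) (p : ℝ → ℝ)
    (hp : IsRadialSol d a b p) (R : ℝ) (hR : 0 < R) (hp' : deriv p R = 0) (hpR : 0 < p R)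
    (hs0 : 0 < Real.sin (p R)) (hs : Real.sin (p R) ^ 2 < 2*b/a) :
    ∃ m > 0, ∀ r, R ≤ r → m ≤ p r := by
  have ha : 0 < a := by linarith
  obtain ⟨h2, -, ho⟩ := hp
  obtain ⟨hz, hz'⟩ := aux_C2 h2
  have hk : (0:ℝ) ≤ (d:ℝ) - 1 := by
    have : (2:ℝ) ≤ d := by exact_mod_cast hd
    linarith
  set E : ℝ → ℝ := fun r => deriv p r ^ 2 / 2 +
    (a/4 * Real.sin (p r) ^ 4 - b/2 * Real.sin (p r) ^ 2) with hE
  have hEd : ∀ r, HasDerivAt E (deriv p r * (deriv (deriv p) r + Fnl a b (p r))) r := by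
    intro r
    have h1 := (((hz' r).pow 2).div_const 2).add
      ((((hz r).sin.pow 4).const_mul (a/4)).sub (((hz r).sin.pow 2).const_mul (b/2)))
    refine HasDerivAt.congr_deriv h1 ?_
    unfold Fnl
    rw [Real.sin_two_mul]
    field_simp
    push_cast
    ring
  have hEa : AntitoneOn E (Set.Ici R) := by
    apply antitoneOn_of_deriv_nonpos (convex_Ici _)
    · exact fun x _ => (hEd x).continuousAt.continuousWithinAt
    · exact fun x _ => (hEd x).differentiableAt.differentiableWithinAt
    · intro x hx
      rw [interior_Ici] at hx
      have hx0 : 0 < x := hR.trans hx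
      rw [(hEd x).deriv]
      have h1 := ho x hx0
      have h3 : deriv (deriv p) x + Fnl a b (p x) = - (((d:ℝ)-1)/x * deriv p x) := by linarith
      rw [h3]
      have h4 : 0 ≤ ((d:ℝ)-1)/x := by positivity
      nlinarith [mul_nonneg h4 (sq_nonneg (deriv p x))]
  have hER : E R < 0 := by
    simp only [hE, hp']
    rw [lt_div_iff₀ ha] at hs
    have : 0 < Real.sin (p R) ^ 2 := by positivity
    nlinarith
  have hsin : ∀ r, R ≤ r → -(2 * E R / b) ≤ Real.sin (p r) ^ 2 := by
    intro r hr
    have h1 : E r ≤ E R := hEa (a := R) (b := r) (Set.mem_Ici.2 le_rfl) (Set.mem_Ici.2 hr) hr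
    have h3 : -(b/2 * Real.sin (p r) ^ 2) ≤ E r := by
      simp only [hE]
      have h4 : 0 ≤ a/4 * Real.sin (p r) ^ 4 := by positivity
      have h5 := sq_nonneg (deriv p r)
      linarith
    rw [← neg_div, div_le_iff₀ hb]
    linarith
  have hη : 0 < -(2 * E R / b) := by
    rw [← neg_div]; apply div_pos <;> linarith
  have hpos : ∀ r, R ≤ r → 0 < p r := by
    intro r hr
    by_contra hc
    obtain ⟨S, h3, h4, h5, -⟩ := aux_first p h2.continuous R r hr hpR (not_lt.1 hc)
    have := hsin S h3.le
    rw [h5] at this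
    simp at this
    simp at hη
    linarith
  refine ⟨Real.sqrt (-(2 * E R / b)), Real.sqrt_pos.2 hη, fun r hr => ?_⟩
  apply Real.sqrt_le_iff.2 ⟨(hpos r hr).le, (hsin r hr).trans ?_⟩
  rw [← sq_abs, ← sq_abs (p r)]
  exact pow_le_pow_left₀ (abs_nonneg _) (Real.abs_sin_le_abs) 2

lemma aux_close (d : ℕ) (hd : 2 ≤ d) (a b : ℝ) (ha : a ≠ 0)
    (w v : ℝ → ℝ) (hw : IsRadialSol d a b w) (hv : IsLinearizedSol d a b w v)
    (R : ℝ) (hR : 0 < R) :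
    ∃ B > 0, ∀ p, IsRadialSol d a b p → 
      (∀ r, 0 ≤ r → r ≤ R → |p r - w r| ≤ B * |p 0 - w 0| ∧
        |deriv p r - deriv w r| ≤ B * |p 0 - w 0|) ∧
      |p R - w R - (p 0 - w 0) * v R| ≤ B * (p 0 - w 0)^2 ∧
      |deriv p R - deriv w R - (p 0 - w 0) * deriv v R| ≤ B * (p 0 - w 0)^2 := by
  obtain ⟨L, hL, hF1, hF2, hF3⟩ := aux_L a b ha
  obtain ⟨hw2, hw0, how⟩ := hw
  obtain ⟨hv2, hv1, hv0, hov⟩ := hv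
  obtain ⟨hwz, hwz'⟩ := aux_C2 hw2
  obtain ⟨hvz, hvz'⟩ := aux_C2 hv2
  have hk : (0:ℝ) ≤ (d:ℝ) - 1 := by
    have : (2:ℝ) ≤ d := by exact_mod_cast hd
    linarith
  set B := Real.exp ((2+L)*R) with hB
  have hB1 : 1 ≤ B := Real.one_le_exp (by positivity)
  have hBr : ∀ r, r ≤ R → Real.exp ((2+L)*r) ≤ B := fun r hr => Real.exp_le_exp.2
    (mul_le_mul_of_nonneg_left hr (by positivity))
  set C := L * B * (1 + R * B) with hC
  have hC0 : 0 ≤ C := by positivity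
  refine ⟨B + C, by positivity, fun p ⟨hp2, hp0, hop⟩ => ?_⟩
  obtain ⟨hpz, hpz'⟩ := aux_C2 hp2
  set h := p 0 - w 0 with hh
  have e1 := aux_energy (fun r => p r - w r) (fun r => deriv p r - deriv w r)
    (fun r => deriv (deriv p) r - deriv (deriv w) r) (fun r => Fnl a b (p r) - Fnl a b (w r))
    (d-1) L 0 R hk hL le_rfl (fun r => (hpz r).sub (hwz r)) (fun r => (hpz' r).sub (hwz' r))
    (fun r hr => by linear_combination hop r hr - how r hr)
    (fun r _ _ => by simpa using hF2 (p r) (w r))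
  simp only [hp0, hw0, ← hh] at e1
  have e2 : ∀ r, 0 ≤ r → r ≤ R → (p r - w r)^2 + (deriv p r - deriv w r)^2 ≤ h^2 * B := by
    intro r h0 hr
    refine (e1 r h0 hr).trans ?_
    have := mul_le_mul_of_nonneg_left (hBr r hr) (sq_nonneg h)
    simpa using this
  have e3 := aux_energy (fun r => p r - w r - h * v r)
    (fun r => deriv p r - deriv w r - h * deriv v r)
    (fun r => deriv (deriv p) r - deriv (deriv w) r - h * deriv (deriv v) r)
    (fun r => Fnl a b (p r) - Fnl a b (w r) - h * (deriv (Fnl a b) (w r) * v r))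
    (d-1) L (L * (h^2 * B)) R hk hL (by positivity)
    (fun r => ((hpz r).sub (hwz r)).sub ((hvz r).const_mul h))
    (fun r => ((hpz' r).sub (hwz' r)).sub ((hvz' r).const_mul h))
    (fun r hr => by linear_combination hop r hr - how r hr - h * hov r hr)
    (fun r h0 hr => by
      have h1 := hF3 (p r) (w r)
      have h2 : (p r - w r)^2 ≤ h^2 * B := by
        linarith [e2 r h0.le hr.le, sq_nonneg (deriv p r - deriv w r)]
      have h3 := mul_le_mul_of_nonneg_left h2 hL
      have h4 := mul_le_mul_of_nonneg_right (hF1 (w r)) (abs_nonneg (p r - w r - h * v r))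
      rw [← abs_mul] at h4
      have h5 := abs_add_le (Fnl a b (p r) - Fnl a b (w r) - deriv (Fnl a b) (w r) * (p r - w r))
        (deriv (Fnl a b) (w r) * (p r - w r - h * v r))
      calc _ = |Fnl a b (p r) - Fnl a b (w r) - deriv (Fnl a b) (w r) * (p r - w r) +
        (deriv (Fnl a b) (w r) * (p r - w r - h * v r))| := by ring_nf
        _ ≤ _ := h5
        _ ≤ _ := by linarith) R hR.le le_rfl
  simp only [hp0, hw0, hv0, hv1, ← hh, ← hB] at e3
  have e4 : (p R - w R - h * v R)^2 + (deriv p R - deriv w R - h * deriv v R)^2 ≤ 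
      (C * h^2)^2 := by
    refine e3.trans ?_
    have h1 : R * B ≤ (1 + R * B)^2 := by nlinarith [mul_pos hR (by positivity : 0 < B)]
    have h2 := mul_le_mul_of_nonneg_left h1 (sq_nonneg (L * (h^2*B)))
    calc _ = (L * (h^2*B))^2 * (R * B) := by ring
      _ ≤ _ := h2
      _ = _ := by rw [hC]; ring
  have hBh : 0 ≤ B * h^2 := by positivity
  have hCh : 0 ≤ C * |h| := by positivity
  refine ⟨fun r h0 hr => ?_, ?_, ?_⟩
  · have h1 := e2 r h0 hr
    have h2 : h^2 * B ≤ (B * |h|)^2 := by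
      rw [mul_pow, sq_abs]
      have hBB : 0 ≤ B * (B - 1) := mul_nonneg (by linarith) (by linarith)
      have := mul_nonneg (sq_nonneg h) hBB
      linarith
    have h3 : 0 ≤ B * |h| := by positivity
    constructor
    · have : |p r - w r| ≤ B * |h| := abs_le_of_sq_le_sq (by linarith [sq_nonneg (deriv p r - deriv w r)]) h3
      linarith
    · have : |deriv p r - deriv w r| ≤ B * |h| := abs_le_of_sq_le_sq (by linarith [sq_nonneg (p r - w r)]) h3
      linarith
  · have : |p R - w R - h * v R| ≤ C * h^2 := abs_le_of_sq_le_sq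
      (by linarith [sq_nonneg (deriv p R - deriv w R - h * deriv v R)]) (by positivity)
    linarith
  · have : |deriv p R - deriv w R - h * deriv v R| ≤ C * h^2 := abs_le_of_sq_le_sq
      (by linarith [sq_nonneg (p R - w R - h * v R)]) (by positivity)
    linarith

lemma aux_min (p : ℝ → ℝ) (hp : Continuous p) (R : ℝ) (hR : 0 ≤ R)
    (h : ∀ r, 0 ≤ r → r ≤ R → 0 < p r) : ∃ m > 0, ∀ r, 0 ≤ r → r ≤ R → m ≤ p r := by
  obtain ⟨x, hx, hm⟩ := isCompact_Icc.exists_isMinOn (Set.nonempty_Icc.2 hR) hp.continuousOn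
  exact ⟨p x, h x hx.1 hx.2, fun r h0 hr => hm ⟨h0, hr⟩⟩

theorem Szero_transition (d : ℕ) (hd : 2 ≤ d) (a b : ℝ)
    (hb : 0 < b) (hab : 2 * b < a)
    (u : ℝ → ℝ → ℝ) (hfam : IsShootingFamily d a b u)
    (y : ℝ) (hy : y ∈ Szero u)
    (v : ℝ → ℝ) (hv : IsLinearizedSol d a b (u y) v)
    (hvlim : Tendsto v atTop atBot)
    (hvlim' : Tendsto (deriv v) atTop atBot) :
    ∃ ε > (0 : ℝ), Set.Ioo (y - ε) y ⊆ Splus u ∧ Set.Ioo y (y + ε) ⊆ Sminus u := by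
  have ha : 0 < a := by linarith
  have hk : (0:ℝ) ≤ (d:ℝ) - 1 := by
    have : (2:ℝ) ≤ d := by exact_mod_cast hd
    linarith
  obtain ⟨⟨hy0, hy1⟩, hwpos, hwlim⟩ := hy
  obtain ⟨hw, hwy⟩ := hfam y ⟨hy0, hy1⟩
  generalize u y = w at hwpos hwlim hw hwy hv
  obtain ⟨hwz, hwz'⟩ := aux_C2 hw.1
  obtain ⟨δ, hδ, hδ1, hanti, hsin⟩ := aux_delta a b hb hab
  have hev := ((hwlim.eventually_lt_const hδ).and ((hvlim.eventually_lt_atBot 0).and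
    ((hvlim'.eventually_lt_atBot 0).and (eventually_gt_atTop 0))))
  obtain ⟨R₀, hR₀⟩ := eventually_atTop.1 hev
  have hR₀pos := (hR₀ R₀ le_rfl).2.2.2
  obtain ⟨R, hRR, hwR'⟩ : ∃ R, R₀ ≤ R ∧ deriv w R < 0 := by
    by_contra! hc
    have hm : MonotoneOn w (Set.Ici R₀) := by
      apply monotoneOn_of_deriv_nonneg (convex_Ici _)
      · exact fun x _ => (hwz x).continuousAt.continuousWithinAt
      · exact fun x _ => (hwz x).differentiableAt.differentiableWithinAt
      · intro x hx
        rw [interior_Ici] at hx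
        exact hc x (le_of_lt hx)
    have h1 := hwpos R₀ hR₀pos.le
    obtain ⟨x, hx1, hx2⟩ := ((hwlim.eventually_lt_const h1).and (eventually_ge_atTop R₀)).exists
    have := hm (a := R₀) (b := x) (Set.mem_Ici.2 le_rfl) hx2 hx2
    linarith
  have hR : 0 < R := by linarith
  have hwδ : ∀ r, R ≤ r → w r < δ := fun r hr => (hR₀ r (hRR.trans hr)).1
  obtain ⟨-, hvR, hvR', -⟩ := hR₀ R hRR
  obtain ⟨B, hB, hclose⟩ := aux_close d hd a b ha.ne' w v hw hv R hR
  obtain ⟨m, hm, hmw⟩ := aux_min w hw.1.continuous R hR.le (fun r h0 _ => hwpos r h0)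
  -- common smallness
  obtain ⟨c, hc, hc1, hc2, hc3, hc4, hc5⟩ : ∃ c > 0, c ≤ m ∧ c ≤ δ - w R ∧ c ≤ -deriv w R ∧
      c ≤ - v R ∧ c ≤ - deriv v R := by
    refine ⟨min m (min (δ - w R) (min (-deriv w R) (min (-v R) (-deriv v R)))), ?_, ?_⟩
    · have := hwδ R le_rfl
      refine lt_min hm (lt_min (by linarith) (lt_min (by linarith) (lt_min ?_ ?_))) <;> linarith
    · simp
  have key : ∀ h : ℝ, B * |h| < c → B * h^2 ≤ |h| * c := by
    intro h hh
    have := mul_le_mul_of_nonneg_left hh.le (abs_nonneg h)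
    rw [← sq_abs]; linarith
  have key' : ∀ h : ℝ, h ≠ 0 → B * |h| < c → B * h^2 < |h| * c := by
    intro h h0 hh
    have := mul_lt_mul_of_pos_left hh (abs_pos.2 h0)
    rw [← sq_abs]; linarith
  refine ⟨min (c / B) (min y (π/2 - y)), lt_min (by positivity) (lt_min hy0 (by linarith)), ?_, ?_⟩
  · rintro x ⟨hx1, hx2⟩
    have i1 := min_le_left (c / B) (min y (π/2 - y))
    have i2 := (min_le_right (c / B) (min y (π/2 - y))).trans (min_le_left _ _)
    have hx : x ∈ Set.Ioo 0 (π/2) := ⟨by linarith, by linarith⟩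
    refine ⟨hx, ?_⟩
    obtain ⟨hp, hpx⟩ := hfam x hx
    generalize u x = p at hp hpx
    obtain ⟨hpz, hpz'⟩ := aux_C2 hp.1
    obtain ⟨k1, k2, k3⟩ := hclose p hp
    rw [hpx, hwy] at k1 k2 k3
    have hxy : |x - y| = y - x := by rw [abs_of_neg (by linarith)]; ring
    have hs : B * |x - y| < c := by
      rw [hxy, mul_comm, ← lt_div_iff₀ hB]; linarith
    have hq := key' (x-y) (by linarith) hs
    have hzR : 0 < p R - w R := by
      have := (abs_le.1 k2).1
      rw [hxy] at hq
      nlinarith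
    have hzR' : 0 < deriv p R - deriv w R := by
      have := (abs_le.1 k3).1
      rw [hxy] at hq
      nlinarith
    have hppos : ∀ r, 0 ≤ r → r ≤ R → 0 < p r := by
      intro r h0 hr
      have := (abs_le.1 (k1 r h0 hr).1).1
      have := hmw r h0 hr
      linarith
    have hpR : p R < δ := by
      have := (abs_le.1 (k1 R hR.le le_rfl).1).2
      linarith
    have hpR' : deriv p R < 0 := by
      have := (abs_le.1 (k1 R hR.le le_rfl).2).2
      linarith
    have hdec : ∀ T, (∀ r, R ≤ r → r < T → 0 < - deriv p r) → 
        ∀ r, R ≤ r → r ≤ T → p r ≤ δ ∧ p R - w R ≤ p r - w r := by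
      intro T hT
      have hm : AntitoneOn p (Set.Icc R T) := by
        apply antitoneOn_of_deriv_nonpos (convex_Icc _ _)
        · exact fun x _ => (hpz x).continuousAt.continuousWithinAt
        · exact fun x _ => (hpz x).differentiableAt.differentiableWithinAt
        · intro x hx
          rw [interior_Icc] at hx
          linarith [hT x hx.1.le hx.2]
      have hle : ∀ r, R ≤ r → r ≤ T → p r ≤ δ := fun r hr hrT =>
        (hm ⟨le_rfl, hr.trans hrT⟩ ⟨hr, hrT⟩ hr).trans hpR.le
      have ht := aux_trap (fun r => p r - w r) (fun r => deriv p r - deriv w r)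
        (fun r => deriv (deriv p) r - deriv (deriv w) r) (fun r => Fnl a b (p r) - Fnl a b (w r))
        (d-1) R T hk hR (fun r => (hpz r).sub (hwz r)) (fun r => (hpz' r).sub (hwz' r))
        (fun r hr => by linear_combination hp.2.2 r hr - hw.2.2 r hr)
        (fun r hr hrT hz => by
          have h1 := hwpos r (by linarith)
          have := hanti (a := w r) (b := p r) ⟨h1.le, (hwδ r hr).le⟩
            ⟨by linarith, hle r hr hrT⟩ (by linarith)
          linarith) hzR hzR'
      exact fun r hr hrT => ⟨hle r hr hrT, ht r hr hrT⟩
    have hpdc : Continuous (fun r => - deriv p r) :=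
      (continuous_iff_continuousAt.2 fun x => (hpz' x).continuousAt).neg
    by_cases hall : ∀ r, R ≤ r → 0 < - deriv p r
    · obtain ⟨m', hm', hm2⟩ := aux_min p hp.1.continuous R hR.le hppos
      refine ⟨min m' (p R - w R), lt_min hm' hzR, fun r hr => ?_⟩
      rcases le_total r R with h | h
      · exact (min_le_left _ _).trans (hm2 r hr h)
      · have h1 := (hdec r (fun s hs _ => hall s hs) r h le_rfl).2
        have h2 := hwpos r hr
        exact (min_le_right _ _).trans (by linarith)
    · push Not at hall
      obtain ⟨T, hT, hT'⟩ := hall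
      obtain ⟨S, hRS, -, hS0, hS⟩ := aux_first _ hpdc R T hT (by linarith) hT'
      have hS0 : deriv p S = 0 := by simpa using hS0
      have hd2 := hdec S hS
      have hpS : ∀ r, 0 ≤ r → r ≤ S → 0 < p r := by
        intro r h0 hr
        rcases le_total r R with h | h
        · exact hppos r h0 h
        · have h1 := (hd2 r h hr).2
          have h2 := hwpos r h0
          linarith
      have hSpos : 0 < S := hR.trans hRS
      have hpSp := hpS S hSpos.le le_rfl
      obtain ⟨s1, s2⟩ := hsin (p S) hpSp (hd2 S hRS.le le_rfl).1
      obtain ⟨m1, hm1, hm1'⟩ := aux_after d hd a b hb hab p hp S hSpos hS0 hpSp s1 s2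
      obtain ⟨m2, hm2, hm2'⟩ := aux_min p hp.1.continuous S hSpos.le hpS
      refine ⟨min m1 m2, lt_min hm1 hm2, fun r hr => ?_⟩
      rcases le_total r S with h | h
      · exact (min_le_right _ _).trans (hm2' r hr h)
      · exact (min_le_left _ _).trans (hm1' r h)
  · rintro x ⟨hx1, hx2⟩
    have i1 := min_le_left (c / B) (min y (π/2 - y))
    have i2 := (min_le_right (c / B) (min y (π/2 - y))).trans (min_le_right _ _)
    have hx : x ∈ Set.Ioo 0 (π/2) := ⟨by linarith, by linarith⟩
    refine ⟨hx, ?_⟩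
    obtain ⟨hp, hpx⟩ := hfam x hx
    generalize u x = p at hp hpx
    obtain ⟨hpz, hpz'⟩ := aux_C2 hp.1
    obtain ⟨k1, k2, k3⟩ := hclose p hp
    rw [hpx, hwy] at k1 k2 k3
    have hxy : |x - y| = x - y := abs_of_pos (by linarith)
    have hs : B * |x - y| < c := by
      rw [hxy, mul_comm, ← lt_div_iff₀ hB]; linarith
    have hq := key' (x-y) (by linarith) hs
    have hzR : 0 < w R - p R := by
      have := (abs_le.1 k2).2
      rw [hxy] at hq
      nlinarith
    have hzR' : 0 < deriv w R - deriv p R := by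
      have := (abs_le.1 k3).2
      rw [hxy] at hq
      nlinarith
    have hp0 : 0 < p 0 := by rw [hpx]; exact hx.1
    by_contra! hne
    have hppos : ∀ r, 0 ≤ r → 0 < p r := by
      intro r hr
      by_contra hc
      obtain ⟨S, h1, -, h3, -⟩ := aux_first p hp.1.continuous 0 r hr hp0 (not_lt.1 hc)
      exact hne S h1 h3
    have ht : ∀ r, R ≤ r → w R - p R ≤ w r - p r := fun r hr =>
      aux_trap (fun r => w r - p r) (fun r => deriv w r - deriv p r)
        (fun r => deriv (deriv w) r - deriv (deriv p) r) (fun r => Fnl a b (w r) - Fnl a b (p r))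
        (d-1) R r hk hR (fun r => (hwz r).sub (hpz r)) (fun r => (hwz' r).sub (hpz' r))
        (fun r hr => by linear_combination hw.2.2 r hr - hp.2.2 r hr)
        (fun r hr hrT hz => by
          have h1 := hppos r (by linarith)
          have h2 := hwδ r hr
          have := hanti (a := p r) (b := w r) ⟨h1.le, by linarith⟩
            ⟨by linarith, h2.le⟩ (by linarith)
          linarith) hzR hzR' r hr le_rfl
    obtain ⟨r, hr1, hr2⟩ := ((hwlim.eventually_lt_const hzR).and (eventually_ge_atTop R)).exists
    have h1 := ht r hr2
    have h2 := hppos r (by linarith)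
    linarith
end
end
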